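/- arXiv:0708.0433 — 4 statements merged into one kernel-verified Lean document; each statement's English description precedes it below -/
import Mathlib

section
/- Let m ≥ 1 and define g : ℝ² ⊃ {(x,y) : x+y ≠ 0} → ℝ by g(x,y) = sinh((x+y)/2)/sinh(3(x+y)/2) − sinh((x−y)/2)/sinh(3(x−y)/2) for x ≠ y, and g(x,x) = sinh(x)/sinh(3x) − 1/3. For ξ = (ξ_1,...,ξ_m) with 0 < ξ_1 < ... < ξ_m, set G(ξ) = det_m[g(ξ_j,ξ_k)] / (∏_{k=1}^m ξ_k² · ∏_{1≤i<j≤m}(ξ_j²−ξ_i²)²). Then G(ξ) tends, as ξ → 0 within this domain, to L_m = [∏_{1≤i<j≤2m} 3(j−i)] · [∏_{i=1}^{2m+1} ∏_{j=1}^{m} (1+3(2j−i))] / [(2m)! · ∏_{1≤i<j≤m}(j²−i²) · ∏_{m+1≤i<j≤2m}(j²−i²) · ∏_{i=1}^{m}∏_{j=1}^{m} 9(m+j−i)(m+j+i)]. -/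
open Finset Filter

open scoped Classical in
/-- The kernel `g(x,y) = sinh((x+y)/2)/sinh(3(x+y)/2) − sinh((x−y)/2)/sinh(3(x−y)/2)`
with the continuous extension `g(x,x) = sinh(x)/sinh(3x) − 1/3` on the diagonal. -/
noncomputable def gKer (x y : ℝ) : ℝ :=
  if x = y then Real.sinh x / Real.sinh (3 * x) - 1 / 3
  else Real.sinh ((x + y) / 2) / Real.sinh (3 * (x + y) / 2) -
       Real.sinh ((x - y) / 2) / Real.sinh (3 * (x - y) / 2)

open scoped ContDiff

/-- Entries of the change of basis from monomials to the monic orthogonal polynomials with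
recurrence `x p_n = p_{n+1} + b_n p_{n-1}`. -/
def jacobiEntry (b : ℕ → ℝ) : ℕ → ℕ → ℝ
  | 0, 0 => 1
  | 0, _ + 1 => 0
  | k + 1, 0 => b 1 * jacobiEntry b k 1
  | k + 1, n + 1 => jacobiEntry b k n + b (n + 2) * jacobiEntry b k (n + 2)

lemma jacobiEntry_eq_zero_of_lt (b : ℕ → ℝ) (k : ℕ) :
    ∀ n, k < n → jacobiEntry b k n = 0 := by
  induction k with
  | zero => intro n hn; cases n with
    | zero => omega
    | succ n => simp [jacobiEntry]
  | succ k ih => intro n hn; cases n with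
    | zero => omega
    | succ n => simp [jacobiEntry, ih n (by omega), ih (n + 2) (by omega)]

lemma jacobiEntry_self (b : ℕ → ℝ) (k : ℕ) : jacobiEntry b k k = 1 := by
  induction k with
  | zero => simp [jacobiEntry]
  | succ k ih => simp [jacobiEntry, ih, jacobiEntry_eq_zero_of_lt b k (k + 2) (by omega)]

lemma jacobiEntry_eq_zero_of_odd (b : ℕ → ℝ) (k : ℕ) :
    ∀ n, Odd (k + n) → jacobiEntry b k n = 0 := by
  induction k with
  | zero => intro n hn; cases n with
    | zero => simp at hn
    | succ n => simp [jacobiEntry]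
  | succ k ih => intro n hn; cases n with
    | zero => simp [jacobiEntry, ih 1 (by simpa using hn)]
    | succ n =>
      have h1 : Odd (k + n) := by rw [Nat.odd_iff] at *; omega
      have h2 : Odd (k + (n + 2)) := by rw [Nat.odd_iff] at *; omega
      simp [jacobiEntry, ih n h1, ih _ h2]

/-- The squared norms attached to the recurrence coefficients `b`. -/
def jacobiWeight (b : ℕ → ℝ) (n : ℕ) : ℝ := ∏ i ∈ range n, b (i + 1)

lemma sum_jacobiEntry_succ (b : ℕ → ℝ) (j : ℕ) (c : ℕ → ℝ) (N : ℕ) :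
    ∑ n ∈ range (N + 1), jacobiEntry b (j + 1) n * c n * jacobiWeight b n =
      ∑ n ∈ range N, jacobiEntry b j n * c (n + 1) * jacobiWeight b (n + 1) +
      ∑ n ∈ range (N + 1), jacobiEntry b j (n + 1) * c n * jacobiWeight b (n + 1) := by
  induction N with
  | zero => simp [jacobiEntry, jacobiWeight]; ring
  | succ N ih =>
    rw [sum_range_succ, ih,
      sum_range_succ (fun n => jacobiEntry b j n * c (n + 1) * jacobiWeight b (n + 1)) N,
      sum_range_succ (fun n => jacobiEntry b j (n + 1) * c n * jacobiWeight b (n + 1)) (N + 1)]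
    have : jacobiWeight b (N + 1 + 1) = jacobiWeight b (N + 1) * b (N + 2) := by
      rw [jacobiWeight, prod_range_succ, jacobiWeight]
    rw [this]
    simp only [jacobiEntry]
    ring

lemma sum_jacobiEntry_symm (b : ℕ → ℝ) {j k N : ℕ} (hj : j ≤ N) (hk : k ≤ N) :
    ∑ n ∈ range (N + 1), jacobiEntry b (j + 1) n * jacobiEntry b k n * jacobiWeight b n =
      ∑ n ∈ range (N + 1), jacobiEntry b j n * jacobiEntry b (k + 1) n * jacobiWeight b n := by
  have h := sum_jacobiEntry_succ b k (jacobiEntry b j) N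
  rw [sum_jacobiEntry_succ]
  simp only [mul_comm (jacobiEntry b j _) (jacobiEntry b (k + 1) _)]
  rw [h, sum_range_succ _ N, sum_range_succ _ N,
    jacobiEntry_eq_zero_of_lt b j (N + 1) (by omega),
    jacobiEntry_eq_zero_of_lt b k (N + 1) (by omega)]
  simp only [mul_comm (jacobiEntry b j _) (jacobiEntry b k _)]
  ring

lemma jacobiEntry_add_zero (b : ℕ → ℝ) {N : ℕ} (j : ℕ) : ∀ k, j + k ≤ N →
    jacobiEntry b (j + k) 0 =
      ∑ n ∈ range (N + 1), jacobiEntry b j n * jacobiEntry b k n * jacobiWeight b n := by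
  induction j with
  | zero =>
    intro k _
    rw [sum_range_succ']
    simp [jacobiEntry, jacobiWeight]
  | succ j ih =>
    intro k hk
    rw [sum_jacobiEntry_symm b (by omega) (by omega), ← ih (k + 1) (by omega)]
    congr 1; omega

/-- Hankel determinant of the moments of even order `≥ 2`. -/
lemma det_jacobiEntry_odd (b : ℕ → ℝ) (m : ℕ) :
    Matrix.det (Matrix.of fun i j : Fin m =>
      jacobiEntry b ((2 * (i : ℕ) + 1) + (2 * (j : ℕ) + 1)) 0) =
      ∏ i : Fin m, jacobiWeight b (2 * (i : ℕ) + 1) := by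
  set L : Matrix (Fin m) (Fin m) ℝ :=
    Matrix.of fun i l => jacobiEntry b (2 * (i : ℕ) + 1) (2 * (l : ℕ) + 1) with hL
  have hM : (Matrix.of fun i j : Fin m =>
      jacobiEntry b ((2 * (i : ℕ) + 1) + (2 * (j : ℕ) + 1)) 0) =
      L * Matrix.diagonal (fun l : Fin m => jacobiWeight b (2 * (l : ℕ) + 1)) * L.transpose := by
    ext i j
    have hi := i.2
    have hj := j.2
    rw [Matrix.mul_apply]
    simp only [Matrix.mul_diagonal, Matrix.of_apply, Matrix.transpose_apply, hL]
    rw [jacobiEntry_add_zero b (N := 4 * m) _ _ (by omega),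
      Fin.sum_univ_eq_sum_range (fun l => jacobiEntry b (2 * (i : ℕ) + 1) (2 * l + 1) *
        jacobiWeight b (2 * l + 1) * jacobiEntry b (2 * (j : ℕ) + 1) (2 * l + 1)) m]
    symm
    rw [← sum_image (s := range m) (g := fun l => 2 * l + 1) (f := fun n =>
      jacobiEntry b (2 * (i : ℕ) + 1) n * jacobiWeight b n * jacobiEntry b (2 * (j : ℕ) + 1) n)
      (fun x _ y _ h => by simpa using h)]
    rw [sum_subset (s₂ := range (4 * m + 1))]
    · exact sum_congr rfl fun n _ => by ring
    · intro n hn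
      simp only [mem_image, mem_range] at hn ⊢
      omega
    · intro n _ hn
      rcases Nat.even_or_odd' n with ⟨c, rfl | rfl⟩
      · rw [jacobiEntry_eq_zero_of_odd b _ (2 * c) (by rw [Nat.odd_iff]; omega)]
        ring
      · simp only [mem_image, mem_range, not_exists, not_and] at hn
        have : ¬ c < m := fun h => hn c h rfl
        rw [jacobiEntry_eq_zero_of_lt b _ (2 * c + 1) (by omega)]
        ring
  have hdet : L.det = 1 := by
    rw [Matrix.det_of_isLowerTriangular]
    · simp [hL, jacobiEntry_self]
    · intro i j hij
      have : (i : ℕ) < j := hij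
      simp only [hL, Matrix.of_apply]
      exact jacobiEntry_eq_zero_of_lt b _ _ (by omega)
  rw [hM, Matrix.det_mul, Matrix.det_mul, Matrix.det_transpose, hdet, Matrix.det_diagonal]
  ring

/-- Divided difference of `x ^ p` at the nodes `s 0, …, s i`. -/
def powDivDiff (s : ℕ → ℝ) : ℕ → ℕ → ℝ
  | 0, 0 => 1
  | _ + 1, 0 => 0
  | 0, p + 1 => s 0 * powDivDiff s 0 p
  | i + 1, p + 1 => powDivDiff s i p + s (i + 1) * powDivDiff s (i + 1) p

/-- Newton basis polynomial of degree `i` evaluated at `x`. -/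
def newtonBasis (s : ℕ → ℝ) (i : ℕ) (x : ℝ) : ℝ := ∏ l ∈ range i, (x - s l)

lemma newtonBasis_eq_zero (s : ℕ → ℝ) {i j : ℕ} (h : j < i) : newtonBasis s i (s j) = 0 :=
  prod_eq_zero (mem_range.2 h) (sub_self _)

lemma mul_sum_powDivDiff (s : ℕ → ℝ) (x : ℝ) (p m : ℕ) :
    x * ∑ i ∈ range (m + 1), powDivDiff s i p * newtonBasis s i x =
      ∑ i ∈ range (m + 1), powDivDiff s i (p + 1) * newtonBasis s i x +
        powDivDiff s m p * newtonBasis s (m + 1) x := by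
  induction m with
  | zero => simp [powDivDiff, newtonBasis]; ring
  | succ m ih =>
    rw [sum_range_succ, mul_add, ih, sum_range_succ _ (m + 1)]
    have h : newtonBasis s (m + 1 + 1) x = newtonBasis s (m + 1) x * (x - s (m + 1)) := by
      rw [newtonBasis, prod_range_succ, newtonBasis]
    rw [h]
    simp only [powDivDiff]
    ring

lemma pow_eq_sum_powDivDiff (s : ℕ → ℝ) {j m : ℕ} (hj : j < m) (p : ℕ) :
    s j ^ p = ∑ i ∈ range m, powDivDiff s i p * newtonBasis s i (s j) := by
  obtain ⟨m, rfl⟩ : ∃ n, m = n + 1 := ⟨m - 1, by omega⟩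
  induction p with
  | zero =>
    rw [sum_range_succ']
    simp [powDivDiff, newtonBasis]
  | succ p ih =>
    rw [pow_succ', ih, mul_sum_powDivDiff, newtonBasis_eq_zero s hj, mul_zero, add_zero]

lemma abs_powDivDiff_le {s : ℕ → ℝ} {r : ℝ} (hr : 0 < r) (hs : ∀ n, |s n| ≤ r) (p : ℕ) :
    ∀ i, |powDivDiff s i p| ≤ (r⁻¹) ^ i * (2 * r) ^ p := by
  induction p with
  | zero => intro i; cases i <;> simp [powDivDiff]; positivity
  | succ p ih =>
    intro i
    cases i with
    | zero =>
      simp only [powDivDiff, abs_mul]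
      have h := mul_le_mul (hs 0) (ih 0) (abs_nonneg _) hr.le
      have : 0 ≤ r * (2 * r) ^ p := by positivity
      simp only [pow_zero, one_mul] at *
      rw [pow_succ]
      linarith
    | succ i =>
      simp only [powDivDiff]
      refine (abs_add_le _ _).trans ?_
      rw [abs_mul]
      have h := mul_le_mul (hs (i + 1)) (ih (i + 1)) (abs_nonneg _) hr.le
      have h2 := ih i
      have e : r * ((r⁻¹) ^ (i + 1) * (2 * r) ^ p) = (r⁻¹) ^ i * (2 * r) ^ p := by
        rw [pow_succ]; field_simp
      have e' : (r⁻¹) ^ (i + 1) * (2 * r) ^ (p + 1) = 2 * ((r⁻¹) ^ i * (2 * r) ^ p) := by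
        rw [pow_succ, pow_succ]; field_simp
      rw [e] at h
      rw [e']
      linarith

lemma tendsto_powDivDiff {α : Type*} {l : Filter α} {s : α → ℕ → ℝ}
    (hs : ∀ n, Tendsto (fun a => s a n) l (nhds 0)) (p : ℕ) :
    ∀ i, Tendsto (fun a => powDivDiff (s a) i p) l (nhds (if i = p then 1 else 0)) := by
  induction p with
  | zero => intro i; cases i <;> simpa [powDivDiff] using tendsto_const_nhds
  | succ p ih =>
    intro i
    cases i with
    | zero => simpa [powDivDiff] using (hs 0).mul (ih 0)
    | succ i => simpa [powDivDiff] using (ih i).add ((hs (i + 1)).mul (ih (i + 1)))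

lemma summable_geometric_prod {C ρ : ℝ} (h0 : 0 ≤ ρ) (h1 : ρ < 1) :
    Summable fun x : ℕ × ℕ => C * (ρ ^ x.1 * ρ ^ x.2) :=
  ((summable_geometric_of_lt_one h0 h1).mul_of_nonneg (summable_geometric_of_lt_one h0 h1)
    (fun _ => pow_nonneg h0 _) (fun _ => pow_nonneg h0 _)).mul_left C

lemma abs_kernel_term_le {K : ℕ → ℕ → ℝ} {C ρ r : ℝ}
    (hK : ∀ p q, |K p q| ≤ C * ρ ^ (p + q)) (hr : 0 < r) {s : ℕ → ℝ}
    (hs : ∀ n, |s n| ≤ r) (i j p q : ℕ) :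
    |K p q * powDivDiff s i p * powDivDiff s j q| ≤
      (C * ((r⁻¹) ^ i * (r⁻¹) ^ j)) * ((2 * r * ρ) ^ p * (2 * r * ρ) ^ q) := by
  rw [abs_mul, abs_mul]
  have h1 := abs_powDivDiff_le hr hs p i
  have h2 := abs_powDivDiff_le hr hs q j
  have h3 := hK p q
  calc |K p q| * |powDivDiff s i p| * |powDivDiff s j q|
      ≤ (C * ρ ^ (p + q)) * ((r⁻¹) ^ i * (2 * r) ^ p) * ((r⁻¹) ^ j * (2 * r) ^ q) := by
        have : 0 ≤ C * ρ ^ (p + q) := (abs_nonneg _).trans h3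
        gcongr
    _ = _ := by rw [mul_pow _ ρ, mul_pow _ ρ, pow_add]; ring

/-- A determinant of kernel values factors through the two-variable divided differences of the
kernel. -/
lemma det_kernel_eq {K : ℕ → ℕ → ℝ} {C ρ r : ℝ} (hρ : 0 < ρ)
    (hK : ∀ p q, |K p q| ≤ C * ρ ^ (p + q)) (hr : 0 < r) (hrρ : 2 * r * ρ < 1) {s : ℕ → ℝ}
    (hs : ∀ n, |s n| ≤ r) (m : ℕ) :
    Matrix.det (Matrix.of fun i j : Fin m => ∑' x : ℕ × ℕ, K x.1 x.2 * s i ^ x.1 * s j ^ x.2) =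
      (∏ i : Fin m, newtonBasis s i (s i)) ^ 2 *
      Matrix.det (Matrix.of fun i j : Fin m =>
        ∑' x : ℕ × ℕ, K x.1 x.2 * powDivDiff s i x.1 * powDivDiff s j x.2) := by
  set N : Matrix (Fin m) (Fin m) ℝ := Matrix.of fun j i => newtonBasis s i (s j) with hN
  set T : Matrix (Fin m) (Fin m) ℝ := Matrix.of fun i j : Fin m =>
        ∑' x : ℕ × ℕ, K x.1 x.2 * powDivDiff s i x.1 * powDivDiff s j x.2 with hT
  have hsum : ∀ i j : ℕ, Summable fun x : ℕ × ℕ =>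
      K x.1 x.2 * powDivDiff s i x.1 * powDivDiff s j x.2 := fun i j =>
    Summable.of_norm_bounded (summable_geometric_prod (by positivity) hrρ)
      fun x => abs_kernel_term_le hK hr hs i j x.1 x.2
  have hfac : (Matrix.of fun i j : Fin m =>
      ∑' x : ℕ × ℕ, K x.1 x.2 * s i ^ x.1 * s j ^ x.2) = N * T * N.transpose := by
    ext i j
    simp only [Matrix.mul_apply, Matrix.transpose_apply, Matrix.of_apply, hN, hT, sum_mul]
    simp only [← tsum_mul_left, ← tsum_mul_right]
    have hs' : ∀ a b : Fin m, Summable fun x : ℕ × ℕ => newtonBasis s b (s i) *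
        (K x.1 x.2 * powDivDiff s b x.1 * powDivDiff s a x.2) * newtonBasis s a (s j) :=
      fun a b => ((hsum b a).mul_left _).mul_right _
    rw [sum_congr rfl fun a _ => (Summable.tsum_finsetSum fun b _ => hs' a b).symm,
      ← Summable.tsum_finsetSum fun a _ => summable_sum fun b _ => hs' a b]
    refine tsum_congr fun x => ?_
    rw [pow_eq_sum_powDivDiff s i.2, pow_eq_sum_powDivDiff s j.2,
      ← Fin.sum_univ_eq_sum_range (fun k => powDivDiff s k x.1 * newtonBasis s k (s i)),
      ← Fin.sum_univ_eq_sum_range (fun k => powDivDiff s k x.2 * newtonBasis s k (s j)),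
      mul_sum]
    refine sum_congr rfl fun a _ => ?_
    rw [mul_sum, sum_mul]
    exact sum_congr rfl fun b _ => by ring
  have hdet : N.det = ∏ i : Fin m, newtonBasis s i (s i) := by
    rw [Matrix.det_of_isLowerTriangular]
    · simp [hN]
    · intro i j hij
      exact newtonBasis_eq_zero s (show (i : ℕ) < j from hij)
  rw [hfac, Matrix.det_mul, Matrix.det_mul, Matrix.det_transpose, hdet]
  ring

/-- Confluent limit of a determinant of kernel values: the two-variable divided differences of an
analytic kernel tend to its Taylor coefficients. -/
lemma tendsto_det_kernel {K : ℕ → ℕ → ℝ} {C ρ r : ℝ} (hρ : 0 < ρ)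
    (hK : ∀ p q, |K p q| ≤ C * ρ ^ (p + q)) (hr : 0 < r) (hrρ : 2 * r * ρ < 1)
    {α : Type*} {l : Filter α} {s : α → ℕ → ℝ} (hsr : ∀ᶠ a in l, ∀ n, |s a n| ≤ r)
    (hs : ∀ n, Tendsto (fun a => s a n) l (nhds 0)) (m : ℕ) :
    Tendsto (fun a => Matrix.det (Matrix.of fun i j : Fin m =>
        ∑' x : ℕ × ℕ, K x.1 x.2 * powDivDiff (s a) i x.1 * powDivDiff (s a) j x.2)) l
      (nhds (Matrix.det (Matrix.of fun i j : Fin m => K i j))) := by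
  have hent : ∀ i j : ℕ, Tendsto (fun a => ∑' x : ℕ × ℕ,
      K x.1 x.2 * powDivDiff (s a) i x.1 * powDivDiff (s a) j x.2) l (nhds (K i j)) := by
    intro i j
    have hlim : K i j = ∑' x : ℕ × ℕ,
        K x.1 x.2 * (if i = x.1 then 1 else 0) * (if j = x.2 then 1 else 0) := by
      rw [tsum_eq_single (i, j)]
      · simp
      · rintro ⟨p, q⟩ hpq
        by_cases h1 : i = p
        · by_cases h2 : j = q
          · exact absurd (by rw [h1, h2]) hpq
          · simp [h2]
        · simp [h1]
    rw [hlim]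
    refine tendsto_tsum_of_dominated_convergence
      (summable_geometric_prod (C := C * ((r⁻¹) ^ i * (r⁻¹) ^ j)) (by positivity) hrρ) ?_ ?_
    · intro x
      exact (tendsto_const_nhds.mul (tendsto_powDivDiff hs _ _)).mul (tendsto_powDivDiff hs _ _)
    · filter_upwards [hsr] with a ha x
      exact abs_kernel_term_le hK hr ha i j x.1 x.2
  simp only [Matrix.det_apply]
  refine tendsto_finsetSum _ fun σ _ => ?_
  refine Tendsto.const_smul ?_ _
  exact tendsto_finsetProd _ fun i _ => by simpa using hent (σ i) i

lemma prod_Icc_one_eq_prod_range {M : Type*} [CommMonoid M] (f : ℕ → M) (n : ℕ) :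
    ∏ i ∈ Icc 1 n, f i = ∏ i ∈ range n, f (i + 1) := by
  induction n with
  | zero => simp
  | succ n ih => rw [prod_Icc_succ_top (by omega), ih, prod_range_succ]

lemma succ_mul_prod_Icc_add (n : ℕ) :
    ((n : ℝ) + 1) * ∏ i ∈ Icc 1 n, ((n : ℝ) + 1 + i) = ∏ l ∈ range n, (2 * (2 * (l : ℝ) + 3)) := by
  have h1 : ((n : ℝ) + 1) * ∏ i ∈ Icc 1 n, ((n : ℝ) + 1 + i) =
      (((n + 1).ascFactorial (n + 1) : ℕ) : ℝ) := by
    rw [Nat.ascFactorial_eq_prod_range, prod_range_succ', prod_Icc_one_eq_prod_range]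
    push_cast
    ring
  have h2 : ((n.factorial : ℕ) : ℝ) * (((n + 1).ascFactorial (n + 1) : ℕ) : ℝ) =
      (((2 * n + 1).factorial : ℕ) : ℝ) := by
    rw [← Nat.cast_mul, Nat.factorial_mul_ascFactorial]
    congr 2; omega
  have h3 : ∀ k : ℕ, ((k.factorial : ℕ) : ℝ) * ∏ l ∈ range k, (2 * (2 * (l : ℝ) + 3)) =
      (((2 * k + 1).factorial : ℕ) : ℝ) := by
    intro k
    induction k with
    | zero => simp
    | succ k ih =>
      rw [prod_range_succ, show 2 * (k + 1) + 1 = (2 * k + 1) + 1 + 1 by ring,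
        Nat.factorial_succ (2 * k + 1 + 1), Nat.factorial_succ (2 * k + 1), Nat.factorial_succ k]
      push_cast
      rw [← ih]
      ring
  have h4 : ((n.factorial : ℕ) : ℝ) ≠ 0 := by positivity
  rw [h1]
  exact mul_left_cancel₀ h4 (h2.trans (h3 n).symm)

lemma prod_range_four_mul_sq_sub_one (m : ℕ) :
    ∏ l ∈ range (2 * m + 1), (4 * (4 * ((l : ℝ) + 1) ^ 2 - 1)) =
      2 * ((((2 * m : ℕ) : ℝ) + 1) * ∏ i ∈ Icc 1 (2 * m), (((2 * m : ℕ) : ℝ) + 1 + i)) *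
      ((((2 * m + 1 : ℕ) : ℝ) + 1) *
        ∏ i ∈ Icc 1 (2 * m + 1), (((2 * m + 1 : ℕ) : ℝ) + 1 + i)) := by
  rw [succ_mul_prod_Icc_add, succ_mul_prod_Icc_add]
  have h : ∏ l ∈ range (2 * m + 1), (4 * (4 * ((l : ℝ) + 1) ^ 2 - 1)) =
      (∏ l ∈ range (2 * m + 1), (2 * (2 * (l : ℝ) + 1))) *
        ∏ l ∈ range (2 * m + 1), (2 * (2 * (l : ℝ) + 3)) := by
    rw [← prod_mul_distrib]
    exact prod_congr rfl fun l _ => by ring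
  rw [h, prod_range_succ' (fun l => 2 * (2 * (l : ℝ) + 1))]
  congr 1
  rw [mul_comm]
  congr 1
  · norm_num
  · exact prod_congr rfl fun l _ => by push_cast; ring

/-- The numerator of the limit formula other than the Vandermonde factor. -/
noncomputable def limitNum (m : ℕ) : ℝ :=
  ∏ i ∈ Icc 1 (2 * m + 1), ∏ j ∈ Icc 1 m, (1 + 3 * (2 * (j : ℝ) - (i : ℝ)))

lemma prod_range_nine_mul_sq_sub_one (m : ℕ) :
    ∏ l ∈ range (2 * m + 1), (9 * ((l : ℝ) + 1) ^ 2 - 1) =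
      2 * (∏ k ∈ range m, ((6 * (k : ℝ) + 5) * (6 * k + 8))) *
      ∏ l ∈ range (2 * m + 1), (3 * (l : ℝ) + 4) := by
  have h : ∀ m : ℕ, ∏ l ∈ range (2 * m + 1), (3 * (l : ℝ) + 2) =
      2 * (∏ k ∈ range m, ((6 * (k : ℝ) + 5) * (6 * k + 8))) := by
    intro m
    induction m with
    | zero => simp
    | succ m ih =>
      rw [show 2 * (m + 1) + 1 = 2 * m + 1 + 1 + 1 by ring, prod_range_succ, prod_range_succ, ih,
        prod_range_succ]
      push_cast
      ring
  rw [← h, ← prod_mul_distrib]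
  exact prod_congr rfl fun l _ => by ring

lemma limitNum_succ (m : ℕ) :
    limitNum (m + 1) = -limitNum m * ∏ l ∈ range (2 * m + 1), (9 * ((l : ℝ) + 1) ^ 2 - 1) := by
  have e : limitNum (m + 1) =
      (∏ i ∈ Icc 1 (2 * m + 3), ∏ j ∈ Icc 1 m, (1 + 3 * (2 * (j : ℝ) - (i : ℝ)))) *
      ∏ i ∈ Icc 1 (2 * m + 3), (1 + 3 * (2 * ((m + 1 : ℕ) : ℝ) - (i : ℝ))) := by
    rw [limitNum, ← prod_mul_distrib]
    refine prod_congr (by congr 1) fun i _ => ?_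
    rw [prod_Icc_succ_top (by omega)]
  have e1 : ∏ i ∈ Icc 1 (2 * m + 3), (1 + 3 * (2 * ((m + 1 : ℕ) : ℝ) - (i : ℝ))) =
      -2 * ∏ l ∈ range (2 * m + 1), (3 * (l : ℝ) + 4) := by
    rw [prod_Icc_succ_top (by omega), prod_Icc_succ_top (by omega), prod_Icc_one_eq_prod_range,
      ← prod_range_reflect (fun l => 3 * (l : ℝ) + 4)]
    have : ∏ i ∈ range (2 * m + 1), (1 + 3 * (2 * ((m + 1 : ℕ) : ℝ) - ((i + 1 : ℕ) : ℝ))) =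
        ∏ j ∈ range (2 * m + 1), (3 * ((2 * m + 1 - 1 - j : ℕ) : ℝ) + 4) := by
      refine prod_congr rfl fun i hi => ?_
      rw [mem_range] at hi
      rw [Nat.cast_sub (by omega)]
      push_cast
      ring
    rw [this]
    push_cast
    ring
  have e2 : ∏ i ∈ Icc 1 (2 * m + 3), ∏ j ∈ Icc 1 m, (1 + 3 * (2 * (j : ℝ) - (i : ℝ))) =
      limitNum m * ∏ k ∈ range m, ((6 * (k : ℝ) + 5) * (6 * k + 8)) := by
    rw [prod_Icc_succ_top (by omega), prod_Icc_succ_top (by omega), limitNum, mul_assoc,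
      ← prod_mul_distrib, prod_Icc_one_eq_prod_range _ m,
      ← prod_range_reflect (fun k => (6 * (k : ℝ) + 5) * (6 * k + 8))]
    congr 1
    refine prod_congr rfl fun i hi => ?_
    rw [mem_range] at hi
    rw [show m - 1 - i = m - (i + 1) by omega, Nat.cast_sub (by omega)]
    push_cast
    ring
  rw [e, e1, e2, prod_range_nine_mul_sq_sub_one]
  ring

lemma limitNum_div_eq_prod (m : ℕ) :
    limitNum m / (3 ^ m * ((2 * m).factorial : ℝ) *
      ∏ j ∈ Icc 1 (2 * m), ∏ i ∈ Ico 1 j, ((j : ℝ) + i)) =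
    ∏ i ∈ range m, (-(2 / 3) * ∏ l ∈ range (2 * i + 1),
      ((9 * ((l : ℝ) + 1) ^ 2 - 1) / (4 * (4 * ((l : ℝ) + 1) ^ 2 - 1)))) := by
  induction m with
  | zero => simp [limitNum]
  | succ m ih =>
    rw [prod_range_succ, ← ih, limitNum_succ, prod_div_distrib, prod_range_four_mul_sq_sub_one,
      show 2 * (m + 1) = 2 * m + 1 + 1 by ring, prod_Icc_succ_top (by omega),
      prod_Icc_succ_top (by omega), Nat.factorial_succ, Nat.factorial_succ,
      Ico_add_one_right_eq_Icc, Ico_add_one_right_eq_Icc]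
    have h1 : ∏ i ∈ Icc 1 (2 * m), (((2 * m : ℕ) : ℝ) + 1 + i) ≠ 0 :=
      prod_ne_zero_iff.2 fun i _ => by positivity
    have h2 : ∏ i ∈ Icc 1 (2 * m + 1), (((2 * m + 1 : ℕ) : ℝ) + 1 + i) ≠ 0 :=
      prod_ne_zero_iff.2 fun i _ => by positivity
    have h3 : ∏ j ∈ Icc 1 (2 * m), ∏ i ∈ Ico 1 j, ((j : ℝ) + i) ≠ 0 :=
      prod_ne_zero_iff.2 fun j hj => prod_ne_zero_iff.2 fun i _ => by
        have : 0 < j := by rw [mem_Icc] at hj; omega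
        positivity
    have h4 : ((2 * m).factorial : ℝ) ≠ 0 := by positivity
    have h5 : (2 * (m : ℝ) + 1) ≠ 0 := by positivity
    have h6 : (2 * (m : ℝ) + 1 + 1) ≠ 0 := by positivity
    push_cast at *
    generalize ∏ i ∈ Icc 1 (2 * m), (2 * (m : ℝ) + 1 + i) = x at *
    generalize ∏ i ∈ Icc 1 (2 * m + 1), (2 * (m : ℝ) + 1 + 1 + i) = y at *
    generalize ∏ j ∈ Icc 1 (2 * m), ∏ i ∈ Ico 1 j, ((j : ℝ) + i) = z at *
    field_simp
    ring

lemma prod_Icc_two_mul_split (m : ℕ) (f : ℕ → ℕ → ℝ) :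
    ∏ j ∈ Icc 1 (2 * m), ∏ i ∈ Ico 1 j, f j i =
      (∏ j ∈ Icc 1 m, ∏ i ∈ Ico 1 j, f j i) *
      (∏ j ∈ Icc (m + 1) (2 * m), ∏ i ∈ Ico (m + 1) j, f j i) *
      ∏ i ∈ Icc 1 m, ∏ j ∈ Icc 1 m, f (m + j) i := by
  have h1 : ∏ j ∈ Icc 1 (2 * m), ∏ i ∈ Ico 1 j, f j i =
      (∏ j ∈ Icc 1 m, ∏ i ∈ Ico 1 j, f j i) *
      ∏ j ∈ Icc (m + 1) (2 * m), ∏ i ∈ Ico 1 j, f j i := by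
    simp only [← Ico_add_one_right_eq_Icc]
    rw [prod_Ico_consecutive _ (by omega) (by omega)]
  have h2 : ∏ i ∈ Icc 1 m, ∏ j ∈ Icc 1 m, f (m + j) i =
      ∏ j ∈ Icc (m + 1) (2 * m), ∏ i ∈ Icc 1 m, f j i := by
    rw [Finset.prod_comm]
    simp only [← Ico_add_one_right_eq_Icc]
    rw [prod_Ico_add (fun j => ∏ i ∈ Ico 1 (m + 1), f j i)]
    congr 2 <;> omega
  rw [h1, h2, mul_assoc, ← prod_mul_distrib]
  congr 1
  refine prod_congr rfl fun j hj => ?_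
  rw [mem_Icc] at hj
  rw [← Ico_add_one_right_eq_Icc, mul_comm, prod_Ico_consecutive _ (by omega) (by omega)]

lemma prod_three_mul_sub (m : ℕ) :
    3 ^ m * ∏ j ∈ Icc 1 (2 * m), ∏ i ∈ Ico 1 j, 3 * ((j : ℝ) - (i : ℝ)) =
      9 ^ (m * m) * ∏ j ∈ Icc 1 (2 * m), ∏ i ∈ Ico 1 j, ((j : ℝ) - (i : ℝ)) := by
  have h : ∏ j ∈ Icc 1 (2 * m), ∏ i ∈ Ico 1 j, 3 * ((j : ℝ) - (i : ℝ)) =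
      (∏ j ∈ Icc 1 (2 * m), (3 : ℝ) ^ (j - 1)) *
        ∏ j ∈ Icc 1 (2 * m), ∏ i ∈ Ico 1 j, ((j : ℝ) - (i : ℝ)) := by
    rw [← prod_mul_distrib]
    exact prod_congr rfl fun j _ => by rw [prod_mul_distrib, prod_const, Nat.card_Ico]
  have h' : (3 : ℝ) ^ m * ∏ j ∈ Icc 1 (2 * m), (3 : ℝ) ^ (j - 1) = 9 ^ (m * m) := by
    clear h
    induction m with
    | zero => simp
    | succ m ih =>
      rw [show 2 * (m + 1) = 2 * m + 1 + 1 by ring, prod_Icc_succ_top (by omega),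
        prod_Icc_succ_top (by omega), show (m + 1) * (m + 1) = m * m + (2 * m + 1) by ring,
        pow_add (9 : ℝ), ← ih, show (9 : ℝ) = 3 ^ 2 by norm_num, ← pow_mul]
      simp only [Nat.add_sub_cancel]
      ring
  rw [h, ← mul_assoc, h']

lemma limit_formula_eq_prod (m : ℕ) :
    ((∏ j ∈ Icc 1 (2 * m), ∏ i ∈ Ico 1 j, 3 * ((j : ℝ) - (i : ℝ))) *
         (∏ i ∈ Icc 1 (2 * m + 1), ∏ j ∈ Icc 1 m, (1 + 3 * (2 * (j : ℝ) - (i : ℝ)))) /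
         (((2 * m).factorial : ℝ) *
          (∏ j ∈ Icc 1 m, ∏ i ∈ Ico 1 j, ((j : ℝ) ^ 2 - (i : ℝ) ^ 2)) *
          (∏ j ∈ Icc (m + 1) (2 * m), ∏ i ∈ Ico (m + 1) j, ((j : ℝ) ^ 2 - (i : ℝ) ^ 2)) *
          (∏ i ∈ Icc 1 m, ∏ j ∈ Icc 1 m,
            9 * ((m : ℝ) + (j : ℝ) - (i : ℝ)) * ((m : ℝ) + (j : ℝ) + (i : ℝ))))) =
    ∏ i ∈ range m, (-(2 / 3) * ∏ l ∈ range (2 * i + 1),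
      ((9 * ((l : ℝ) + 1) ^ 2 - 1) / (4 * (4 * ((l : ℝ) + 1) ^ 2 - 1)))) := by
  have hsplit := prod_Icc_two_mul_split m fun j i => (j : ℝ) ^ 2 - (i : ℝ) ^ 2
  have h9 : (∏ i ∈ Icc 1 m, ∏ j ∈ Icc 1 m,
      9 * ((m : ℝ) + (j : ℝ) - (i : ℝ)) * ((m : ℝ) + (j : ℝ) + (i : ℝ))) =
      9 ^ (m * m) * ∏ i ∈ Icc 1 m, ∏ j ∈ Icc 1 m, (((m + j : ℕ) : ℝ) ^ 2 - (i : ℝ) ^ 2) := by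
    have : ∀ i j : ℕ, 9 * ((m : ℝ) + (j : ℝ) - (i : ℝ)) * ((m : ℝ) + (j : ℝ) + (i : ℝ)) =
        9 * (((m + j : ℕ) : ℝ) ^ 2 - (i : ℝ) ^ 2) := fun i j => by push_cast; ring
    simp only [this, prod_mul_distrib, prod_const, Nat.card_Icc, Nat.add_sub_cancel, pow_mul]
  have hfac : ∏ j ∈ Icc 1 (2 * m), ∏ i ∈ Ico 1 j, ((j : ℝ) ^ 2 - (i : ℝ) ^ 2) =
      (∏ j ∈ Icc 1 (2 * m), ∏ i ∈ Ico 1 j, ((j : ℝ) - i)) *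
      ∏ j ∈ Icc 1 (2 * m), ∏ i ∈ Ico 1 j, ((j : ℝ) + i) := by
    simp only [← prod_mul_distrib]
    exact prod_congr rfl fun j _ => prod_congr rfl fun i _ => by ring
  have hV : ∏ j ∈ Icc 1 (2 * m), ∏ i ∈ Ico 1 j, ((j : ℝ) - i) ≠ 0 :=
    prod_ne_zero_iff.2 fun j _ => prod_ne_zero_iff.2 fun i hi => by
      have : i < j := (mem_Ico.1 hi).2
      exact sub_ne_zero.2 (by exact_mod_cast this.ne')
  have h3 := prod_three_mul_sub m
  rw [← limitNum_div_eq_prod, h9, ← limitNum]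
  have hden : ((2 * m).factorial : ℝ) *
          (∏ j ∈ Icc 1 m, ∏ i ∈ Ico 1 j, ((j : ℝ) ^ 2 - (i : ℝ) ^ 2)) *
          (∏ j ∈ Icc (m + 1) (2 * m), ∏ i ∈ Ico (m + 1) j, ((j : ℝ) ^ 2 - (i : ℝ) ^ 2)) *
          (9 ^ (m * m) * ∏ i ∈ Icc 1 m, ∏ j ∈ Icc 1 m, (((m + j : ℕ) : ℝ) ^ 2 - (i : ℝ) ^ 2)) =
      9 ^ (m * m) * (∏ j ∈ Icc 1 (2 * m), ∏ i ∈ Ico 1 j, ((j : ℝ) - i)) *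
      (((2 * m).factorial : ℝ) * ∏ j ∈ Icc 1 (2 * m), ∏ i ∈ Ico 1 j, ((j : ℝ) + i)) := by
    linear_combination ((2 * m).factorial : ℝ) * 9 ^ (m * m) * (hfac - hsplit)
  have hA : ∏ j ∈ Icc 1 (2 * m), ∏ i ∈ Ico 1 j, 3 * ((j : ℝ) - (i : ℝ)) =
      9 ^ (m * m) * (∏ j ∈ Icc 1 (2 * m), ∏ i ∈ Ico 1 j, ((j : ℝ) - (i : ℝ))) / 3 ^ m := by
    rw [eq_div_iff (by positivity), mul_comm, h3]
  have hc : (9 : ℝ) ^ (m * m) * (∏ j ∈ Icc 1 (2 * m), ∏ i ∈ Ico 1 j, ((j : ℝ) - i)) ≠ 0 :=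
    mul_ne_zero (by positivity) hV
  rw [hden, hA, mul_assoc (3 ^ m : ℝ), div_mul_eq_mul_div, div_div, mul_left_comm,
    mul_div_mul_left _ _ hc]

/-- The function `sinh (u / 2) / sinh (3 u / 2)`, extended continuously to `u = 0`. -/
noncomputable def sinhRatio (u : ℝ) : ℝ := 1 / (1 + 2 * Real.cosh u)

lemma one_add_two_mul_cosh_pos (u : ℝ) : 0 < 1 + 2 * Real.cosh u := by
  have := Real.cosh_pos u
  positivity

lemma sinh_three_halves_mul (u : ℝ) :
    Real.sinh (3 * u / 2) = Real.sinh (u / 2) * (1 + 2 * Real.cosh u) := by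
  have h1 : 3 * u / 2 = 3 * (u / 2) := by ring
  have h2 : Real.cosh u = Real.cosh (2 * (u / 2)) := by congr 1; ring
  rw [h1, h2, Real.sinh_three_mul, Real.cosh_two_mul, Real.cosh_sq]
  ring

lemma sinh_div_sinh_eq_sinhRatio {u : ℝ} (hu : u ≠ 0) :
    Real.sinh (u / 2) / Real.sinh (3 * u / 2) = sinhRatio u := by
  have h : Real.sinh (u / 2) ≠ 0 := Real.sinh_ne_zero.2 (by simpa using hu)
  rw [sinh_three_halves_mul, sinhRatio, div_mul_eq_div_div, div_self h]

lemma gKer_eq_sinhRatio {x y : ℝ} (h : x + y ≠ 0) :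
    gKer x y = sinhRatio (x + y) - sinhRatio (x - y) := by
  unfold gKer
  split_ifs with hxy
  · subst hxy
    rw [← sinh_div_sinh_eq_sinhRatio h, sub_self, sinhRatio, Real.cosh_zero]
    congr 3 <;> ring
  · rw [sinh_div_sinh_eq_sinhRatio h, sinh_div_sinh_eq_sinhRatio (sub_ne_zero.2 hxy)]

lemma contDiff_sinhRatio : ContDiff ℝ ∞ sinhRatio := by
  unfold sinhRatio
  exact contDiff_const.div (contDiff_const.add (contDiff_const.mul Real.contDiff_cosh))
    fun u => (one_add_two_mul_cosh_pos u).ne'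

lemma analyticAt_sinhRatio : AnalyticAt ℝ sinhRatio 0 := by
  unfold sinhRatio
  exact analyticAt_const.div (analyticAt_const.add (analyticAt_const.mul Real.analyticAt_cosh))
    (one_add_two_mul_cosh_pos 0).ne'

/-- Recurrence coefficients of the orthogonal polynomials whose moments are the derivatives of
`sinhRatio` at `0`. -/
noncomputable def recCoeff (n : ℕ) : ℝ :=
  -((n : ℝ) ^ 2 * (9 * (n : ℝ) ^ 2 - 1) / (4 * (4 * (n : ℝ) ^ 2 - 1)))

/-- The monic orthogonal polynomials, evaluated at the differentiation operator and applied to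
`sinhRatio`. -/
noncomputable def orthoDeriv : ℕ → ℝ → ℝ
  | 0 => sinhRatio
  | 1 => deriv sinhRatio
  | n + 2 => fun u => deriv (orthoDeriv (n + 1)) u - recCoeff (n + 1) * orthoDeriv n u

lemma contDiff_deriv_infty {f : ℝ → ℝ} (hf : ContDiff ℝ ∞ f) : ContDiff ℝ ∞ (deriv f) :=
  (contDiff_infty_iff_deriv.1 hf).2

lemma contDiff_orthoDeriv_pair (n : ℕ) :
    ContDiff ℝ ∞ (orthoDeriv n) ∧ ContDiff ℝ ∞ (orthoDeriv (n + 1)) := by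
  induction n with
  | zero => exact ⟨contDiff_sinhRatio, contDiff_deriv_infty contDiff_sinhRatio⟩
  | succ n ih =>
    refine ⟨ih.2, ?_⟩
    simp only [orthoDeriv]
    exact (contDiff_deriv_infty ih.2).sub (contDiff_const.mul ih.1)

lemma contDiff_orthoDeriv (n : ℕ) : ContDiff ℝ ∞ (orthoDeriv n) := (contDiff_orthoDeriv_pair n).1

lemma hasDerivAt_orthoDeriv (n : ℕ) (u : ℝ) :
    HasDerivAt (orthoDeriv n) (deriv (orthoDeriv n) u) u :=
  ((contDiff_orthoDeriv n).differentiable (by simp)).differentiableAt.hasDerivAt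

lemma hasDerivAt_deriv_orthoDeriv (n : ℕ) (u : ℝ) :
    HasDerivAt (deriv (orthoDeriv n)) (deriv (deriv (orthoDeriv n)) u) u :=
  ((contDiff_deriv_infty (contDiff_orthoDeriv n)).differentiable
    (by simp)).differentiableAt.hasDerivAt

lemma deriv_orthoDeriv_succ (n : ℕ) (u : ℝ) :
    deriv (orthoDeriv (n + 1)) u =
      orthoDeriv (n + 2) u + recCoeff (n + 1) * orthoDeriv n u := by
  simp only [orthoDeriv]; ring

lemma hasDerivAt_sinh_mul_const (u : ℝ) :
    HasDerivAt (fun u : ℝ => Real.sinh (3 / 2 * u)) (3 / 2 * Real.cosh (3 / 2 * u)) u := by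
  have h := ((hasDerivAt_id u).const_mul (3 / 2 : ℝ)).sinh
  simpa [mul_comm] using h

lemma hasDerivAt_cosh_mul_const (u : ℝ) :
    HasDerivAt (fun u : ℝ => Real.cosh (3 / 2 * u)) (3 / 2 * Real.sinh (3 / 2 * u)) u := by
  have h := ((hasDerivAt_id u).const_mul (3 / 2 : ℝ)).cosh
  simpa [mul_comm] using h

lemma sinh_mul_sinhRatio (u : ℝ) : Real.sinh (3 / 2 * u) * sinhRatio u = Real.sinh (1 / 2 * u) := by
  have h := sinh_three_halves_mul u
  rw [show 3 / 2 * u = 3 * u / 2 by ring, h, sinhRatio, show 1 / 2 * u = u / 2 by ring,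
    mul_assoc, mul_one_div_cancel (one_add_two_mul_cosh_pos u).ne', mul_one]

/-- The second order differential equation satisfied by `sinhRatio`. -/
lemma sinhRatio_ode (u : ℝ) :
    Real.sinh (3 / 2 * u) * deriv (deriv sinhRatio) u +
      3 * Real.cosh (3 / 2 * u) * deriv sinhRatio u +
      2 * Real.sinh (3 / 2 * u) * sinhRatio u = 0 := by
  have hF : ∀ u, HasDerivAt sinhRatio (deriv sinhRatio u) u := hasDerivAt_orthoDeriv 0
  have hF' : ∀ u, HasDerivAt (deriv sinhRatio) (deriv (deriv sinhRatio) u) u :=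
    hasDerivAt_deriv_orthoDeriv 0
  have hs : ∀ u : ℝ, HasDerivAt (fun u : ℝ => Real.sinh (1 / 2 * u))
      (1 / 2 * Real.cosh (1 / 2 * u)) u := fun u => by
    simpa [mul_comm] using ((hasDerivAt_id u).const_mul (1 / 2 : ℝ)).sinh
  have hc : HasDerivAt (fun u : ℝ => 1 / 2 * Real.cosh (1 / 2 * u))
      (1 / 2 * (1 / 2 * Real.sinh (1 / 2 * u))) u := by
    have := (((hasDerivAt_id u).const_mul (1 / 2 : ℝ)).cosh).const_mul (1 / 2 : ℝ)
    simpa [mul_comm] using this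
  have h1 : ∀ u, 3 / 2 * Real.cosh (3 / 2 * u) * sinhRatio u +
      Real.sinh (3 / 2 * u) * deriv sinhRatio u = 1 / 2 * Real.cosh (1 / 2 * u) := fun u =>
    ((hasDerivAt_sinh_mul_const u).mul (hF u)).unique
      ((hs u).congr_of_eventuallyEq (Eventually.of_forall sinh_mul_sinhRatio))
  have h2 := ((((hasDerivAt_cosh_mul_const u).const_mul (3 / 2 : ℝ)).mul (hF u)).add
    ((hasDerivAt_sinh_mul_const u).mul (hF' u))).unique
      (hc.congr_of_eventuallyEq (Eventually.of_forall h1))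
  linear_combination h2 - 1 / 4 * sinh_mul_sinhRatio u

/-- First order relation between consecutive `orthoDeriv`s. -/
lemma sinh_mul_deriv_orthoDeriv (n : ℕ) : ∀ u : ℝ,
    ((n : ℝ) + 1) * (Real.sinh (3 / 2 * u) * deriv (orthoDeriv n) u) =
      3 / 2 * n * (n + 1) * (Real.cosh (3 / 2 * u) * orthoDeriv n u) +
      (2 * n + 1) * (Real.sinh (3 / 2 * u) * orthoDeriv (n + 1) u) := by
  induction n using Nat.twoStepInduction with
  | zero => intro u; simp [orthoDeriv]
  | one =>
    intro u
    have h := sinhRatio_ode u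
    simp only [orthoDeriv, recCoeff]
    push_cast
    linear_combination (-1) * h
  | more n ih0 ih1 =>
    intro u
    have hd := (((hasDerivAt_sinh_mul_const u).mul
      (hasDerivAt_deriv_orthoDeriv (n + 1) u)).const_mul (((n + 1 : ℕ) : ℝ) + 1)).unique
      (((((hasDerivAt_cosh_mul_const u).mul (hasDerivAt_orthoDeriv (n + 1) u)).const_mul
        (3 / 2 * ((n + 1 : ℕ) : ℝ) * (((n + 1 : ℕ) : ℝ) + 1))).add
      (((hasDerivAt_sinh_mul_const u).mul (hasDerivAt_orthoDeriv (n + 2) u)).const_mul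
        (2 * ((n + 1 : ℕ) : ℝ) + 1))).congr_of_eventuallyEq (Eventually.of_forall ih1))
    have h0 := ih0 u
    have e2 : deriv (orthoDeriv (n + 2)) u = deriv (deriv (orthoDeriv (n + 1))) u -
        recCoeff (n + 1) * deriv (orthoDeriv n) u :=
      ((hasDerivAt_deriv_orthoDeriv (n + 1) u).sub
        ((hasDerivAt_orthoDeriv n u).const_mul _)).deriv
    have e1 := deriv_orthoDeriv_succ n u
    have e3 := deriv_orthoDeriv_succ (n + 1) u
    have hl1 : (2 * (n : ℝ) + 3) * recCoeff (n + 1) * (2 * n + 1) =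
        -((n + 1) ^ 2 * (9 * (n + 1) ^ 2 - 1) / 4) := by
      rw [recCoeff, show 4 * ((n + 1 : ℕ) : ℝ) ^ 2 - 1 = (2 * n + 1) * (2 * n + 3) by
        push_cast; ring]
      push_cast
      field_simp
    have hl2 : (2 * (n : ℝ) + 5) * recCoeff (n + 2) * (2 * n + 3) =
        -((n + 2) ^ 2 * (9 * (n + 2) ^ 2 - 1) / 4) := by
      rw [recCoeff, show 4 * ((n + 2 : ℕ) : ℝ) ^ 2 - 1 = (2 * n + 3) * (2 * n + 5) by
        push_cast; ring]
      push_cast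
      field_simp
    set a := recCoeff (n + 1)
    set b := recCoeff (n + 2)
    set S := Real.sinh (3 / 2 * u)
    set C := Real.cosh (3 / 2 * u)
    set p := orthoDeriv n u
    set p1 := deriv (orthoDeriv n) u
    set q := orthoDeriv (n + 1) u
    set q1 := deriv (orthoDeriv (n + 1)) u
    set q2 := deriv (deriv (orthoDeriv (n + 1))) u
    set r := orthoDeriv (n + 2) u
    have e3' : orthoDeriv (n + 2 + 1) u = q2 - a * p1 - b * q := by
      have : deriv (orthoDeriv (n + 1 + 1)) u = q2 - a * p1 := e2
      rw [this] at e3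
      linear_combination -e3
    have hr : r = q1 - a * p := by linear_combination -e1
    rw [e3', e2]
    rw [e2, hr] at hd
    push_cast at hd h0 ⊢
    have goal' : ((n : ℝ) + 2) * (S * (q2 - a * p1)) +
        3 / 2 * (n + 2) * (n + 3) * (C * (q1 - a * p)) - (2 * n + 5) * b * (S * q) = 0 := by
      have hmul : ((n : ℝ) + 1) ^ 2 * (2 * n + 3) * (((n : ℝ) + 2) * (S * (q2 - a * p1)) +
        3 / 2 * (n + 2) * (n + 3) * (C * (q1 - a * p)) - (2 * n + 5) * b * (S * q)) = 0 := by
        linear_combination (-((n : ℝ) + 2) * (n + 1) * (2 * n + 3)) * hd +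
          ((n : ℝ) + 2) ^ 2 * a * (2 * n + 3) * h0 +
          S * q * (n + 2) ^ 2 * hl1 - S * q * (n + 1) ^ 2 * hl2
      have h0 : ((n : ℝ) + 1) ^ 2 * (2 * n + 3) ≠ 0 := by positivity
      exact (mul_eq_zero.1 hmul).resolve_left h0
    linear_combination -goal' - 3 / 2 * ((n : ℝ) + 2) * (n + 3) * C * hr

lemma orthoDeriv_succ_zero (n : ℕ) : orthoDeriv (n + 1) 0 = 0 := by
  have h := sinh_mul_deriv_orthoDeriv (n + 1) 0
  simp only [mul_zero, Real.sinh_zero, zero_mul, Real.cosh_zero, one_mul, add_zero] at h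
  have h2 : (3 / 2 * ((n + 1 : ℕ) : ℝ) * (((n + 1 : ℕ) : ℝ) + 1)) ≠ 0 := by positivity
  exact (mul_eq_zero.1 h.symm).resolve_left h2

lemma sum_jacobiEntry_mul_shift (b : ℕ → ℝ) (k : ℕ) (f : ℕ → ℝ) (N : ℕ) :
    jacobiEntry b k 0 * f 1 + ∑ n ∈ range (N + 1), jacobiEntry b k (n + 1) *
        (f (n + 2) + b (n + 1) * f n) =
      ∑ n ∈ range (N + 1), jacobiEntry b (k + 1) n * f n +
        jacobiEntry b k N * f (N + 1) + jacobiEntry b k (N + 1) * f (N + 2) := by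
  induction N with
  | zero => simp [jacobiEntry]; ring
  | succ N ih =>
    rw [sum_range_succ, ← add_assoc, ih, sum_range_succ _ (N + 1)]
    simp only [jacobiEntry]
    ring

lemma iteratedDeriv_sinhRatio (k : ℕ) : iteratedDeriv k sinhRatio =
    fun u => ∑ n ∈ range (k + 1), jacobiEntry recCoeff k n * orthoDeriv n u := by
  induction k with
  | zero => ext u; simp [jacobiEntry, orthoDeriv]
  | succ k ih =>
    rw [iteratedDeriv_succ, ih]
    ext u
    have h := HasDerivAt.fun_sum (u := range (k + 1)) fun n _ =>
      (hasDerivAt_orthoDeriv n u).const_mul (jacobiEntry recCoeff k n)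
    rw [h.deriv, sum_range_succ' _ k]
    have h1 : deriv (orthoDeriv 0) u = orthoDeriv 1 u := rfl
    have h2 := sum_jacobiEntry_mul_shift recCoeff k (fun n => orthoDeriv n u) (k + 1)
    rw [sum_range_succ, sum_range_succ, jacobiEntry_eq_zero_of_lt _ k (k + 1) (by omega),
      jacobiEntry_eq_zero_of_lt _ k (k + 1 + 1) (by omega)] at h2
    simp only [deriv_orthoDeriv_succ, h1]
    linear_combination h2

lemma iteratedDeriv_sinhRatio_zero (k : ℕ) :
    iteratedDeriv k sinhRatio 0 = jacobiEntry recCoeff k 0 / 3 := by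
  rw [iteratedDeriv_sinhRatio]
  simp only [sum_range_succ', orthoDeriv_succ_zero, mul_zero, sum_const_zero, zero_add]
  simp only [orthoDeriv, sinhRatio, Real.cosh_zero]
  ring

lemma exists_taylor_bound {f : ℝ → ℝ} (hf : AnalyticAt ℝ f 0) :
    ∃ C R : ℝ, 0 < R ∧ (∀ n, |iteratedDeriv n f 0 / n.factorial| ≤ C * R ^ n) ∧
      ∀ u, |u| * R < 1 → HasSum (fun n => iteratedDeriv n f 0 / n.factorial * u ^ n) (f u) := by
  obtain ⟨r, hr⟩ := hf.hasFPowerSeriesAt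
  obtain ⟨r', h0, hr'⟩ := ENNReal.lt_iff_exists_nnreal_btwn.1 hr.r_pos
  have hpos : 0 < r' := by exact_mod_cast h0
  have hpos' : (0 : ℝ) < r' := by exact_mod_cast hpos
  obtain ⟨C, -, hC⟩ := FormalMultilinearSeries.norm_mul_pow_le_of_lt_radius _
    (hr'.trans_le hr.r_le)
  refine ⟨C, (r' : ℝ)⁻¹, by positivity, fun n => ?_, fun u hu => ?_⟩
  · have h := hC n
    rw [FormalMultilinearSeries.ofScalars_norm, Real.norm_eq_abs] at h
    rw [inv_pow, ← div_eq_mul_inv, le_div_iff₀ (by positivity)]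
    exact h
  · have hu' : u ∈ Metric.eball (0 : ℝ) r := by
      rw [mem_eball_zero_iff]
      refine lt_trans ?_ hr'
      rw [← div_eq_mul_inv, div_lt_one hpos'] at hu
      rw [enorm_eq_nnnorm]
      exact_mod_cast (show ‖u‖ < r' from hu)
    have h := hr.hasSum hu'
    simpa [FormalMultilinearSeries.ofScalars_apply_eq, mul_comm] using h

lemma hasSum_sum_antidiagonal {J : ℕ × ℕ → ℝ} (hJ : Summable J) :
    HasSum (fun n => ∑ z ∈ antidiagonal n, J z) (∑' z, J z) :=
  (HasAntidiagonal.sigmaAntidiagonalEquivProd.hasSum_iff.2 hJ.hasSum).sigma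
    fun n => Finset.hasSum (antidiagonal n) J

lemma hasSum_binomial {c : ℕ → ℝ} {C R δ x y S : ℝ} (hR : 0 < R)
    (hc : ∀ n, |c n| ≤ C * R ^ n) (hδ : 2 * R * δ < 1) (hx : |x| ≤ δ) (hy : |y| ≤ δ)
    (hS : HasSum (fun n => c n * (x + y) ^ n) S) :
    HasSum (fun z : ℕ × ℕ => c (z.1 + z.2) * (z.1 + z.2).choose z.1 * x ^ z.1 * y ^ z.2) S := by
  have hδ0 : 0 ≤ δ := (abs_nonneg x).trans hx
  have hsum : Summable fun z : ℕ × ℕ =>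
      c (z.1 + z.2) * (z.1 + z.2).choose z.1 * x ^ z.1 * y ^ z.2 := by
    refine Summable.of_norm_bounded
      (summable_geometric_prod (C := C) (ρ := 2 * R * δ) (by positivity) hδ) ?_
    rintro ⟨a, b⟩
    simp only [norm_mul, Real.norm_eq_abs, abs_pow, Nat.abs_cast]
    have h1 : (((a + b).choose a : ℕ) : ℝ) ≤ 2 ^ (a + b) := by
      exact_mod_cast Nat.choose_le_two_pow (a + b) a
    have h2 := hc (a + b)
    have h3 : 0 ≤ C * R ^ (a + b) := (abs_nonneg _).trans h2
    calc |c (a + b)| * ((a + b).choose a : ℕ) * |x| ^ a * |y| ^ b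
        ≤ (C * R ^ (a + b)) * 2 ^ (a + b) * δ ^ a * δ ^ b := by gcongr
      _ = C * ((2 * R * δ) ^ a * (2 * R * δ) ^ b) := by
        simp only [pow_add, mul_pow]; ring
  have e : (fun n => c n * (x + y) ^ n) = fun n => ∑ z ∈ antidiagonal n,
      c (z.1 + z.2) * (z.1 + z.2).choose z.1 * x ^ z.1 * y ^ z.2 := by
    ext n
    rw [(Commute.all x y).add_pow', mul_sum]
    refine sum_congr rfl fun z hz => ?_
    rw [mem_antidiagonal.1 hz, nsmul_eq_mul]
    ring
  rw [e] at hS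
  rw [hS.unique (hasSum_sum_antidiagonal hsum)]
  exact hsum.hasSum

lemma hasSum_odd_odd {c : ℕ → ℝ} {C R δ x y S S' : ℝ} (hR : 0 < R)
    (hc : ∀ n, |c n| ≤ C * R ^ n) (hodd : ∀ n, Odd n → c n = 0) (hδ : 2 * R * δ < 1)
    (hx : |x| ≤ δ) (hy : |y| ≤ δ)
    (hS : HasSum (fun n => c n * (x + y) ^ n) S) (hS' : HasSum (fun n => c n * (x - y) ^ n) S') :
    HasSum (fun z : ℕ × ℕ => 2 * c ((2 * z.1 + 1) + (2 * z.2 + 1)) *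
      ((2 * z.1 + 1) + (2 * z.2 + 1)).choose (2 * z.1 + 1) *
        x ^ (2 * z.1 + 1) * y ^ (2 * z.2 + 1)) (S - S') := by
  have h1 := hasSum_binomial hR hc hδ hx hy hS
  have h2 := hasSum_binomial hR hc hδ hx (by rwa [abs_neg]) (by simpa [sub_eq_add_neg] using hS')
  have h3 := h1.sub h2
  have hinj : Function.Injective fun z : ℕ × ℕ => (2 * z.1 + 1, 2 * z.2 + 1) := by
    rintro ⟨a, b⟩ ⟨a', b'⟩ h
    simpa using h
  rw [← hinj.hasSum_iff] at h3
  · refine (congrArg (HasSum · _) (funext fun z => ?_)).mpr h3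
    simp only [Function.comp_apply, Odd.neg_pow (odd_two_mul_add_one z.2)]
    ring
  · rintro ⟨a, b⟩ hab
    rcases Nat.even_or_odd b with hb | hb
    · simp [hb.neg_pow]
    · rcases Nat.even_or_odd a with ha | ha
      · simp [hodd (a + b) (ha.add_odd hb)]
      · obtain ⟨p, rfl⟩ := ha
        obtain ⟨q, rfl⟩ := hb
        exact absurd ⟨(p, q), rfl⟩ hab

/-- Taylor coefficients in `x ^ 2`, `y ^ 2` of the kernel `g (x, y) / (x y)`. -/
noncomputable def kerCoeff (p q : ℕ) : ℝ :=
  2 * (iteratedDeriv ((2 * p + 1) + (2 * q + 1)) sinhRatio 0 /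
    ((2 * p + 1) + (2 * q + 1)).factorial) * ((2 * p + 1) + (2 * q + 1)).choose (2 * p + 1)

lemma exists_gKer_expansion : ∃ C R : ℝ, 0 < R ∧
    (∀ p q, |kerCoeff p q| ≤ C * (4 * R ^ 2) ^ (p + q)) ∧
    ∀ x y, 0 < x → 0 < y → 4 * R * x ≤ 1 → 4 * R * y ≤ 1 →
      gKer x y = x * (y * ∑' z : ℕ × ℕ, kerCoeff z.1 z.2 * (x ^ 2) ^ z.1 * (y ^ 2) ^ z.2) := by
  obtain ⟨C, R, hR, hb, hs⟩ := exists_taylor_bound analyticAt_sinhRatio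
  refine ⟨8 * C * R ^ 2, R, hR, fun p q => ?_, fun x y hx hy hxR hyR => ?_⟩
  · rw [kerCoeff, abs_mul, abs_mul, Nat.abs_cast, abs_two]
    have h1 : ((((2 * p + 1) + (2 * q + 1)).choose (2 * p + 1) : ℕ) : ℝ) ≤
        2 ^ ((2 * p + 1) + (2 * q + 1)) := by
      exact_mod_cast Nat.choose_le_two_pow _ _
    have h2 := hb ((2 * p + 1) + (2 * q + 1))
    have h3 := (abs_nonneg _).trans h2
    refine (mul_le_mul (mul_le_mul_of_nonneg_left h2 zero_le_two) h1 (by positivity)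
      (by positivity)).trans (le_of_eq ?_)
    rw [show (2 * p + 1) + (2 * q + 1) = 2 * (p + q) + 2 by ring, pow_add, pow_add, pow_mul,
      pow_mul, mul_pow]
    norm_num
    ring
  · have hx' : x ≤ 1 / (4 * R) := by rw [le_div_iff₀ (by positivity)]; linarith
    have hy' : y ≤ 1 / (4 * R) := by rw [le_div_iff₀ (by positivity)]; linarith
    have hδ : 2 * R * (1 / (4 * R)) < 1 := by field_simp; norm_num
    have hxy : |x + y| * R < 1 := by rw [abs_of_pos (by positivity)]; linarith
    have hxy' : |x - y| * R < 1 := by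
      have : |x - y| ≤ x + y := abs_le.2 ⟨by linarith, by linarith⟩
      nlinarith
    have h := hasSum_odd_odd hR hb (fun n hn => by
        rw [iteratedDeriv_sinhRatio_zero, jacobiEntry_eq_zero_of_odd _ n 0 (by simpa using hn)]
        simp) hδ
      (by rwa [abs_of_pos hx]) (by rwa [abs_of_pos hy]) (hs _ hxy) (hs _ hxy')
    rw [gKer_eq_sinhRatio (by positivity), ← h.tsum_eq, ← tsum_mul_left, ← tsum_mul_left]
    refine tsum_congr fun z => ?_
    rw [kerCoeff]
    ring

lemma kerCoeff_eq (p q : ℕ) : kerCoeff p q =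
    ((2 * p + 1).factorial : ℝ)⁻¹ * (((2 * q + 1).factorial : ℝ)⁻¹ *
      (2 / 3 * jacobiEntry recCoeff ((2 * p + 1) + (2 * q + 1)) 0)) := by
  rw [kerCoeff, iteratedDeriv_sinhRatio_zero, Nat.cast_add_choose]
  have : (((2 * p + 1) + (2 * q + 1)).factorial : ℝ) ≠ 0 := by positivity
  field_simp

lemma jacobiWeight_recCoeff_odd (i : ℕ) :
    jacobiWeight recCoeff (2 * i + 1) = -((2 * i + 1).factorial : ℝ) ^ 2 *
      ∏ l ∈ range (2 * i + 1), ((9 * ((l : ℝ) + 1) ^ 2 - 1) / (4 * (4 * ((l : ℝ) + 1) ^ 2 - 1))) := by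
  have h : ∀ n : ℕ, jacobiWeight recCoeff n = (-1) ^ n * (n.factorial : ℝ) ^ 2 *
      ∏ l ∈ range n, ((9 * ((l : ℝ) + 1) ^ 2 - 1) / (4 * (4 * ((l : ℝ) + 1) ^ 2 - 1))) := by
    intro n
    induction n with
    | zero => simp [jacobiWeight]
    | succ n ih =>
      rw [jacobiWeight, prod_range_succ, ← jacobiWeight, ih, prod_range_succ, recCoeff,
        Nat.factorial_succ]
      push_cast
      ring
  rw [h, (odd_two_mul_add_one i).neg_one_pow, neg_one_mul]

lemma det_kerCoeff (m : ℕ) : Matrix.det (Matrix.of fun i j : Fin m => kerCoeff i j) =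
    ∏ i ∈ range m, (-(2 / 3) * ∏ l ∈ range (2 * i + 1),
      ((9 * ((l : ℝ) + 1) ^ 2 - 1) / (4 * (4 * ((l : ℝ) + 1) ^ 2 - 1)))) := by
  simp only [kerCoeff_eq]
  have h1 := Matrix.det_mul_column (fun i : Fin m => ((2 * (i : ℕ) + 1).factorial : ℝ)⁻¹)
    (Matrix.of fun i j : Fin m => ((2 * (j : ℕ) + 1).factorial : ℝ)⁻¹ *
      (2 / 3 * jacobiEntry recCoeff ((2 * (i : ℕ) + 1) + (2 * (j : ℕ) + 1)) 0))
  have h2 := Matrix.det_mul_row (fun i : Fin m => ((2 * (i : ℕ) + 1).factorial : ℝ)⁻¹)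
    (Matrix.of fun i j : Fin m =>
      (2 / 3 * jacobiEntry recCoeff ((2 * (i : ℕ) + 1) + (2 * (j : ℕ) + 1)) 0))
  have h3 := Matrix.det_mul_column (fun _ : Fin m => (2 / 3 : ℝ))
    (Matrix.of fun i j : Fin m =>
      jacobiEntry recCoeff ((2 * (i : ℕ) + 1) + (2 * (j : ℕ) + 1)) 0)
  simp only [Matrix.of_apply] at h1 h2 h3
  rw [h1, h2, h3, det_jacobiEntry_odd, ← Fin.prod_univ_eq_prod_range (fun i =>
    -(2 / 3) * ∏ l ∈ range (2 * i + 1),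
      ((9 * ((l : ℝ) + 1) ^ 2 - 1) / (4 * (4 * ((l : ℝ) + 1) ^ 2 - 1))))]
  simp only [← prod_mul_distrib]
  refine prod_congr rfl fun i _ => ?_
  rw [jacobiWeight_recCoeff_odd]
  have : ((2 * (i : ℕ) + 1).factorial : ℝ) ≠ 0 := by positivity
  generalize ∏ l ∈ range (2 * (i : ℕ) + 1),
    ((9 * ((l : ℝ) + 1) ^ 2 - 1) / (4 * (4 * ((l : ℝ) + 1) ^ 2 - 1))) = w
  field_simp

/-- The squares of a finite tuple, extended by zero. -/
noncomputable def sqNodes {m : ℕ} (ξ : Fin m → ℝ) (n : ℕ) : ℝ :=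
  if h : n < m then ξ ⟨n, h⟩ ^ 2 else 0

lemma sqNodes_val {m : ℕ} (ξ : Fin m → ℝ) (i : Fin m) : sqNodes ξ i = ξ i ^ 2 := by
  simp [sqNodes]

lemma newtonBasis_sqNodes {m : ℕ} (ξ : Fin m → ℝ) (j : Fin m) :
    newtonBasis (sqNodes ξ) j (sqNodes ξ j) =
      ∏ i ∈ Finset.univ.filter (fun i : Fin m => i < j), ((ξ j) ^ 2 - (ξ i) ^ 2) := by
  symm
  rw [newtonBasis]
  refine prod_bij (fun i _ => (i : ℕ)) (fun i hi => ?_) (fun i _ i' _ h => Fin.ext h)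
    (fun n hn => ?_) fun i _ => by rw [sqNodes_val, sqNodes_val]
  · simpa using hi
  · have hn' : n < (j : ℕ) := by simpa using hn
    exact ⟨⟨n, hn'.trans j.2⟩, mem_filter.2 ⟨mem_univ _, hn'⟩, rfl⟩

lemma tendsto_sqNodes {m : ℕ} (n : ℕ) :
    Tendsto (fun ξ : Fin m → ℝ => sqNodes ξ n) (nhds 0) (nhds 0) := by
  unfold sqNodes
  split_ifs with h
  · have : Continuous fun ξ : Fin m → ℝ => ξ ⟨n, h⟩ ^ 2 := by fun_prop
    simpa using this.tendsto 0
  · exact tendsto_const_nhds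

/-- Homogeneous limit of the inhomogeneous determinant: for `m ≥ 1`, the ratio
`det_m[g(ξ_j,ξ_k)] / (∏_k ξ_k² · ∏_{i<j}(ξ_j²−ξ_i²)²)`
tends, as `ξ → 0` within the domain `0 < ξ_1 < … < ξ_m`, to the explicit constant `L_m`. -/
theorem det_g_homogeneous_limit (m : ℕ) (hm : 1 ≤ m) :
    Tendsto
      (fun ξ : Fin m → ℝ =>
        Matrix.det (Matrix.of fun j k : Fin m => gKer (ξ j) (ξ k)) /
          ((∏ k : Fin m, (ξ k) ^ 2) *
            ∏ j : Fin m, ∏ i ∈ Finset.univ.filter (fun i : Fin m => i < j),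
              ((ξ j) ^ 2 - (ξ i) ^ 2) ^ 2))
      (nhdsWithin 0 {ξ : Fin m → ℝ | StrictMono ξ ∧ ∀ i, 0 < ξ i})
      (nhds
        ((∏ j ∈ Icc 1 (2 * m), ∏ i ∈ Ico 1 j, 3 * ((j : ℝ) - (i : ℝ))) *
         (∏ i ∈ Icc 1 (2 * m + 1), ∏ j ∈ Icc 1 m, (1 + 3 * (2 * (j : ℝ) - (i : ℝ)))) /
         (((2 * m).factorial : ℝ) *
          (∏ j ∈ Icc 1 m, ∏ i ∈ Ico 1 j, ((j : ℝ) ^ 2 - (i : ℝ) ^ 2)) *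
          (∏ j ∈ Icc (m + 1) (2 * m), ∏ i ∈ Ico (m + 1) j, ((j : ℝ) ^ 2 - (i : ℝ) ^ 2)) *
          (∏ i ∈ Icc 1 m, ∏ j ∈ Icc 1 m,
            9 * ((m : ℝ) + (j : ℝ) - (i : ℝ)) * ((m : ℝ) + (j : ℝ) + (i : ℝ)))))) := by
  rw [limit_formula_eq_prod, ← det_kerCoeff]
  obtain ⟨C, R, hR, hK, hg⟩ := exists_gKer_expansion
  have hr : 0 < 1 / (16 * R ^ 2) := by positivity
  have hrρ : 2 * (1 / (16 * R ^ 2)) * (4 * R ^ 2) < 1 := by field_simp; norm_num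
  set D := {ξ : Fin m → ℝ | StrictMono ξ ∧ ∀ i, 0 < ξ i}
  have hsmall : ∀ᶠ ξ : Fin m → ℝ in nhdsWithin 0 D, ∀ i, 4 * R * ξ i < 1 := by
    refine eventually_nhdsWithin_of_eventually_nhds (eventually_all.2 fun i => ?_)
    have : Continuous fun ξ : Fin m → ℝ => 4 * R * ξ i := by fun_prop
    exact this.tendsto 0 (Iio_mem_nhds (by simp))
  have hmem : ∀ᶠ ξ : Fin m → ℝ in nhdsWithin 0 D, ξ ∈ D := self_mem_nhdsWithin
  have hnodes : ∀ᶠ ξ : Fin m → ℝ in nhdsWithin 0 D, ∀ n, |sqNodes ξ n| ≤ 1 / (16 * R ^ 2) := by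
    filter_upwards [hsmall, hmem] with ξ hξ hξD n
    unfold sqNodes
    split_ifs with h
    · have h1 := hξ ⟨n, h⟩
      have h2 := hξD.2 ⟨n, h⟩
      rw [abs_of_nonneg (by positivity), le_div_iff₀ (by positivity)]
      have h3 : 0 < 4 * R * ξ ⟨n, h⟩ := by positivity
      nlinarith
    · simpa using hr.le
  refine (tendsto_det_kernel (by positivity) hK hr hrρ hnodes
    (fun n => (tendsto_sqNodes n).mono_left nhdsWithin_le_nhds) m).congr' ?_
  filter_upwards [hsmall, hmem, hnodes] with ξ hξ hξD hξn
  have hmat : (Matrix.of fun j k : Fin m => gKer (ξ j) (ξ k)) =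
      Matrix.of fun j k : Fin m => ξ j * (ξ k * ∑' z : ℕ × ℕ,
        kerCoeff z.1 z.2 * sqNodes ξ j ^ z.1 * sqNodes ξ k ^ z.2) := by
    ext j k
    simp only [Matrix.of_apply, sqNodes_val]
    exact hg _ _ (hξD.2 j) (hξD.2 k) (hξ j).le (hξ k).le
  have h1 := Matrix.det_mul_column ξ (Matrix.of fun j k : Fin m => ξ k * ∑' z : ℕ × ℕ,
        kerCoeff z.1 z.2 * sqNodes ξ j ^ z.1 * sqNodes ξ k ^ z.2)
  have h2 := Matrix.det_mul_row ξ (Matrix.of fun j k : Fin m => ∑' z : ℕ × ℕ,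
        kerCoeff z.1 z.2 * sqNodes ξ j ^ z.1 * sqNodes ξ k ^ z.2)
  simp only [Matrix.of_apply] at h1 h2
  rw [hmat, h1, h2, det_kernel_eq (by positivity) hK hr hrρ hξn m]
  simp only [newtonBasis_sqNodes, prod_pow]
  have hne1 : ∏ k, ξ k ≠ 0 := prod_ne_zero_iff.2 fun k _ => (hξD.2 k).ne'
  have hne2 : ∏ j : Fin m, ∏ i ∈ Finset.univ.filter (fun i : Fin m => i < j),
      ((ξ j) ^ 2 - (ξ i) ^ 2) ≠ 0 :=
    prod_ne_zero_iff.2 fun j _ => prod_ne_zero_iff.2 fun i hi => by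
      have hij : ξ i < ξ j := hξD.1 (by simpa using hi)
      have hi0 := hξD.2 i
      have : 0 < ξ j ^ 2 - ξ i ^ 2 := by nlinarith
      exact this.ne'
  rw [eq_div_iff (by positivity)]
  ring
end

section
/- For every integer m ≥ 1 the following identity between explicit products holds: (3/4)^{m²} / ((−2)^m · (2m)!) · [∏_{1≤i<j≤2m}(j−i) · ∏_{i=1}^{2m+1} ∏_{j=1}^{m} (1+3(2j−i))] / [∏_{i=1}^{m}∏_{j=1}^{m}(m+j−i)(m+j+i) · ∏_{1≤i<j≤m}(j²−i²) · ∏_{m+1≤i<j≤2m}(j²−i²)] = 3 · 2^{m+1} · 4^{−m²} · ∏_{j=1}^{m}(3j−1) · ∏_{k=1}^{m−1} (6k+3)!/(2k+1)! · √( (1/(2m)!) · ∏_{k=1}^{2m} k!/(2m+k)! ). -/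
open Finset

/-- A full square product of a symmetric function is the squared strict triangle times the
diagonal. -/
theorem prod_Icc_square_eq_sq_triangle_mul_diag {R : Type*} [CommMonoid R] (f : ℕ → ℕ → R)
    (hf : ∀ i j, f i j = f j i) (n : ℕ) :
    ∏ j ∈ Icc 1 n, ∏ i ∈ Icc 1 n, f j i =
      (∏ j ∈ Icc 1 n, ∏ i ∈ Ico 1 j, f j i) ^ 2 * ∏ j ∈ Icc 1 n, f j j := by
  induction n with
  | zero => simp
  | succ n ih =>
    have hI : Ico 1 (n + 1) = Icc 1 n := by ext; simp
    have hs : ∏ j ∈ Icc 1 n, f j (n + 1) = ∏ i ∈ Icc 1 n, f (n + 1) i :=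
      prod_congr rfl fun _ _ => hf _ _
    simp only [prod_Icc_succ_top (Nat.le_add_left 1 n), prod_mul_distrib, ih, hI, hs, sq]
    ac_rfl

/-- Splitting the strict triangle on `1, …, 2m` into two triangles on `1, …, m` and
`m + 1, …, 2m`, and a square. -/
theorem prod_triangle_two_mul {R : Type*} [CommMonoid R] (f : ℕ → ℕ → R) (m : ℕ) :
    ∏ j ∈ Icc 1 (2 * m), ∏ i ∈ Ico 1 j, f j i =
      (∏ i ∈ Icc 1 m, ∏ j ∈ Icc 1 m, f (m + j) i) *
        (∏ j ∈ Icc 1 m, ∏ i ∈ Ico 1 j, f j i) *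
        ∏ j ∈ Icc (m + 1) (2 * m), ∏ i ∈ Ico (m + 1) j, f j i := by
  have hI : ∀ n, Icc 1 n = Ico 1 (n + 1) := fun n => by ext; simp
  have hU : Icc (m + 1) (2 * m) = Ico (m + 1) (2 * m + 1) := by ext; simp
  have hsq : ∏ i ∈ Icc 1 m, ∏ j ∈ Icc 1 m, f (m + j) i =
      ∏ j ∈ Ico (m + 1) (2 * m + 1), ∏ i ∈ Ico 1 (m + 1), f j i := by
    rw [prod_comm, hI, prod_Ico_add (fun j => ∏ i ∈ Ico 1 (m + 1), f j i)]
    congr 2 <;> ring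
  have hsplit : ∏ j ∈ Ico (m + 1) (2 * m + 1), ∏ i ∈ Ico 1 j, f j i =
      ∏ j ∈ Ico (m + 1) (2 * m + 1),
        ((∏ i ∈ Ico 1 (m + 1), f j i) * ∏ i ∈ Ico (m + 1) j, f j i) :=
    prod_congr rfl fun j hj =>
      (prod_Ico_consecutive _ (Nat.le_add_left 1 m) (mem_Ico.1 hj).1).symm
  rw [hsq, hU, hI, hI, ← prod_Ico_consecutive _ (Nat.le_add_left 1 m)
    (by lia : m + 1 ≤ 2 * m + 1), hsplit, prod_mul_distrib]
  ac_rfl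

theorem factorial_mul_prod_Icc_add (k n : ℕ) :
    (k.factorial : ℝ) * ∏ i ∈ Icc 1 n, ((k : ℝ) + i) = ((n + k).factorial : ℝ) := by
  induction n with
  | zero => simp
  | succ n ih =>
    rw [prod_Icc_succ_top (Nat.le_add_left 1 n), ← mul_assoc, ih,
      show n + 1 + k = n + k + 1 by ring, Nat.factorial_succ]
    push_cast
    ring

theorem prod_Icc_two_mul_cast (n : ℕ) :
    ∏ j ∈ Icc 1 n, ((j : ℝ) + j) = 2 ^ n * (n.factorial : ℝ) := by
  induction n with
  | zero => simp
  | succ n ih =>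
    rw [prod_Icc_succ_top (Nat.le_add_left 1 n), ih, Nat.factorial_succ]
    push_cast
    ring

theorem prod_triangle_add_pos (n : ℕ) :
    0 < ∏ j ∈ Icc 1 n, ∏ i ∈ Ico 1 j, ((j : ℝ) + i) :=
  prod_pos fun j hj => prod_pos fun i _ => by
    have : (0 : ℝ) < j := by exact_mod_cast (mem_Icc.1 hj).1
    positivity

theorem prod_triangle_sub_pos (n : ℕ) :
    0 < ∏ j ∈ Icc 1 n, ∏ i ∈ Ico 1 j, ((j : ℝ) - i) :=
  prod_pos fun j _ => prod_pos fun i hi => by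
    have : (i : ℝ) < j := by exact_mod_cast (mem_Ico.1 hi).2
    linarith

theorem sqrt_prod_factorial_div (m : ℕ) :
    Real.sqrt ((1 / ((2 * m).factorial : ℝ)) *
        ∏ k ∈ Icc 1 (2 * m), (k.factorial : ℝ) / ((2 * m + k).factorial : ℝ)) =
      1 / ((∏ j ∈ Icc 1 (2 * m), ∏ i ∈ Ico 1 j, ((j : ℝ) + i)) * 2 ^ m *
        ((2 * m).factorial : ℝ)) := by
  have hP := prod_triangle_add_pos (2 * m)
  have hfac : ∏ k ∈ Icc 1 (2 * m), (k.factorial : ℝ) / ((2 * m + k).factorial : ℝ) =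
      (∏ k ∈ Icc 1 (2 * m), ∏ i ∈ Icc 1 (2 * m), ((k : ℝ) + i))⁻¹ := by
    rw [← prod_inv_distrib]
    refine prod_congr rfl fun k _ => ?_
    have hk : (k.factorial : ℝ) ≠ 0 := by positivity
    rw [← factorial_mul_prod_Icc_add k (2 * m), div_mul_eq_div_div, div_self hk, one_div]
  rw [hfac, prod_Icc_square_eq_sq_triangle_mul_diag (fun j i : ℕ => (j : ℝ) + i)
    (fun _ _ => add_comm _ _), prod_Icc_two_mul_cast]
  rw [Real.sqrt_eq_iff_mul_self_eq_of_pos (by positivity)]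
  field_simp
  ring

theorem three_pow_mul_factorial_mul_prod (n : ℕ) :
    3 ^ n * (n.factorial : ℝ) * (∏ t ∈ range n, (3 * (t : ℝ) + 1)) *
      (∏ t ∈ range n, (3 * (t : ℝ) + 2)) = ((3 * n).factorial : ℝ) := by
  induction n with
  | zero => simp
  | succ n ih =>
    rw [prod_range_succ, prod_range_succ, show 3 * (n + 1) = 3 * n + 2 + 1 by ring,
      Nat.factorial_succ (3 * n + 2), Nat.factorial_succ (3 * n + 1), Nat.factorial_succ (3 * n),
      Nat.factorial_succ n]
    push_cast
    rw [← ih]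
    ring

/-- The column added when `m` grows by one. -/
theorem prod_Icc_column (m : ℕ) :
    ∏ i ∈ Icc 1 (2 * m + 3), (1 + 3 * (2 * ((m : ℝ) + 1) - (i : ℝ))) =
      -2 * (6 * m + 4) * ∏ t ∈ range (2 * m + 1), (3 * (t : ℝ) + 1) := by
  rw [← Ico_add_one_right_eq_Icc, prod_Ico_eq_prod_range, ← prod_range_reflect,
    show 2 * m + 3 + 1 - 1 = 2 * m + 1 + 1 + 1 by lia, prod_range_succ', prod_range_succ]
  have h : ∏ t ∈ range (2 * m + 1),
      (1 + 3 * (2 * ((m : ℝ) + 1) - ((1 + (2 * m + 1 + 1 + 1 - 1 - (t + 1)) : ℕ) : ℝ))) =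
        ∏ t ∈ range (2 * m + 1), (3 * (t : ℝ) + 1) := by
    refine prod_congr rfl fun t ht => ?_
    have ht' := mem_range.1 ht
    rw [show 1 + (2 * m + 1 + 1 + 1 - 1 - (t + 1)) = 2 * m + 2 - t by lia,
      Nat.cast_sub (by lia)]
    push_cast
    ring
  rw [h, show 1 + (2 * m + 1 + 1 + 1 - 1 - (2 * m + 1 + 1)) = 1 by lia,
    show 1 + (2 * m + 1 + 1 + 1 - 1 - 0) = 2 * m + 3 by lia]
  push_cast
  ring

/-- The two rows added when `m` grows by one. -/
theorem prod_Icc_rows (m : ℕ) :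
    2 * ((∏ j ∈ Icc 1 m, (1 + 3 * (2 * (j : ℝ) - (2 * m + 2)))) *
        ∏ j ∈ Icc 1 m, (1 + 3 * (2 * (j : ℝ) - (2 * m + 3)))) =
      ∏ t ∈ range (2 * m + 1), (3 * (t : ℝ) + 2) := by
  rw [← prod_mul_distrib, ← Ico_add_one_right_eq_Icc, prod_Ico_eq_prod_range,
    ← prod_range_reflect, Nat.add_sub_cancel]
  have h : ∏ r ∈ range m, ((1 + 3 * (2 * ((1 + (m - 1 - r) : ℕ) : ℝ) - (2 * m + 2))) *
      (1 + 3 * (2 * ((1 + (m - 1 - r) : ℕ) : ℝ) - (2 * m + 3)))) =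
        ∏ r ∈ range m, ((6 * (r : ℝ) + 5) * (6 * r + 8)) := by
    refine prod_congr rfl fun r hr => ?_
    have hr' := mem_range.1 hr
    rw [show 1 + (m - 1 - r) = m - r by lia, Nat.cast_sub hr'.le]
    ring
  rw [h]
  clear h
  induction m with
  | zero => simp
  | succ m ih =>
    rw [prod_range_succ, show 2 * (m + 1) + 1 = 2 * m + 1 + 1 + 1 by ring, prod_range_succ,
      prod_range_succ _ (2 * m + 1), ← ih]
    push_cast
    ring

theorem three_pow_mul_prod_rectangle (m : ℕ) :
    3 ^ (m ^ 2) * (-1) ^ m *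
        (∏ i ∈ Icc 1 (2 * m + 1), ∏ j ∈ Icc 1 m, (1 + 3 * (2 * (j : ℝ) - (i : ℝ)))) =
      2 ^ m * (∏ j ∈ Icc 1 m, (3 * (j : ℝ) - 1)) *
        ∏ k ∈ range m, ((6 * k + 3).factorial : ℝ) / ((2 * k + 1).factorial : ℝ) := by
  induction m with
  | zero => simp
  | succ m ih =>
    have hstep : ∏ i ∈ Icc 1 (2 * (m + 1) + 1), ∏ j ∈ Icc 1 (m + 1),
        (1 + 3 * (2 * (j : ℝ) - (i : ℝ))) =
        (∏ i ∈ Icc 1 (2 * m + 1), ∏ j ∈ Icc 1 m, (1 + 3 * (2 * (j : ℝ) - (i : ℝ)))) *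
          ((∏ j ∈ Icc 1 m, (1 + 3 * (2 * (j : ℝ) - (2 * m + 2)))) *
            ∏ j ∈ Icc 1 m, (1 + 3 * (2 * (j : ℝ) - (2 * m + 3)))) *
          ∏ i ∈ Icc 1 (2 * m + 3), (1 + 3 * (2 * ((m : ℝ) + 1) - (i : ℝ))) := by
      have hc₂ : ((2 * m + 1 + 1 : ℕ) : ℝ) = 2 * m + 2 := by push_cast; ring
      have hc₃ : ((2 * m + 1 + 1 + 1 : ℕ) : ℝ) = 2 * m + 3 := by push_cast; ring
      simp only [prod_Icc_succ_top (Nat.le_add_left 1 m), prod_mul_distrib]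
      rw [show 2 * (m + 1) + 1 = 2 * m + 1 + 1 + 1 by ring, prod_Icc_succ_top (by lia),
        prod_Icc_succ_top (by lia), hc₂, hc₃, Nat.cast_succ m]
      ring
    have hfac : ((6 * m + 3).factorial : ℝ) / ((2 * m + 1).factorial : ℝ) =
        3 ^ (2 * m + 1) * (∏ t ∈ range (2 * m + 1), (3 * (t : ℝ) + 1)) *
          ∏ t ∈ range (2 * m + 1), (3 * (t : ℝ) + 2) := by
      rw [show 6 * m + 3 = 3 * (2 * m + 1) by ring, ← three_pow_mul_factorial_mul_prod]
      field_simp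
    rw [hstep, prod_Icc_column, prod_range_succ _ m, prod_Icc_succ_top (Nat.le_add_left 1 m), hfac,
      ← prod_Icc_rows]
    push_cast
    linear_combination (3 ^ (2 * m + 1) * 2 * (6 * (m : ℝ) + 4) *
      ((∏ j ∈ Icc 1 m, (1 + 3 * (2 * (j : ℝ) - (2 * m + 2)))) *
        ∏ j ∈ Icc 1 m, (1 + 3 * (2 * (j : ℝ) - (2 * m + 3)))) *
      ∏ t ∈ range (2 * m + 1), (3 * (t : ℝ) + 1)) * ih

/-- The product-form / factorial-form identity for the emptiness formation probability
`τ(m)` of the open XXZ chain at `Δ = 1/2` with zero boundary field. -/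
theorem efp_product_factorial_identity (m : ℕ) (hm : 1 ≤ m) :
    ((3 / 4 : ℝ) ^ (m ^ 2) / ((-2 : ℝ) ^ m * ((2 * m).factorial : ℝ))) *
      ((∏ j ∈ Icc 1 (2 * m), ∏ i ∈ Ico 1 j, ((j : ℝ) - (i : ℝ))) *
        (∏ i ∈ Icc 1 (2 * m + 1), ∏ j ∈ Icc 1 m, (1 + 3 * (2 * (j : ℝ) - (i : ℝ))))) /
      ((∏ i ∈ Icc 1 m, ∏ j ∈ Icc 1 m,
          ((m : ℝ) + (j : ℝ) - (i : ℝ)) * ((m : ℝ) + (j : ℝ) + (i : ℝ))) *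
        (∏ j ∈ Icc 1 m, ∏ i ∈ Ico 1 j, ((j : ℝ) ^ 2 - (i : ℝ) ^ 2)) *
        (∏ j ∈ Icc (m + 1) (2 * m), ∏ i ∈ Ico (m + 1) j, ((j : ℝ) ^ 2 - (i : ℝ) ^ 2))) =
    3 * 2 ^ (m + 1) / (4 : ℝ) ^ (m ^ 2) *
      (∏ j ∈ Icc 1 m, (3 * (j : ℝ) - 1)) *
      (∏ k ∈ Icc 1 (m - 1), ((6 * k + 3).factorial : ℝ) / ((2 * k + 1).factorial : ℝ)) *
      Real.sqrt ((1 / ((2 * m).factorial : ℝ)) *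
        ∏ k ∈ Icc 1 (2 * m), (k.factorial : ℝ) / ((2 * m + k).factorial : ℝ)) := by
  have hden := prod_triangle_two_mul (fun j i : ℕ => (j : ℝ) ^ 2 - (i : ℝ) ^ 2) m
  have hsq : ∏ i ∈ Icc 1 m, ∏ j ∈ Icc 1 m,
      ((m : ℝ) + (j : ℝ) - (i : ℝ)) * ((m : ℝ) + (j : ℝ) + (i : ℝ)) =
        ∏ i ∈ Icc 1 m, ∏ j ∈ Icc 1 m, (((m + j : ℕ) : ℝ) ^ 2 - (i : ℝ) ^ 2) :=
    prod_congr rfl fun i _ => prod_congr rfl fun j _ => by push_cast; ring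
  have hfactor : ∏ j ∈ Icc 1 (2 * m), ∏ i ∈ Ico 1 j, ((j : ℝ) ^ 2 - (i : ℝ) ^ 2) =
      (∏ j ∈ Icc 1 (2 * m), ∏ i ∈ Ico 1 j, ((j : ℝ) + i)) *
        ∏ j ∈ Icc 1 (2 * m), ∏ i ∈ Ico 1 j, ((j : ℝ) - i) := by
    simp only [sq_sub_sq, prod_mul_distrib]
  have hrange : ∏ k ∈ range m, ((6 * k + 3).factorial : ℝ) / ((2 * k + 1).factorial : ℝ) =
      6 * ∏ k ∈ Icc 1 (m - 1), ((6 * k + 3).factorial : ℝ) / ((2 * k + 1).factorial : ℝ) := by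
    obtain ⟨n, rfl⟩ := Nat.exists_eq_add_of_le' hm
    rw [prod_range_eq_mul_Ico _ (Nat.add_one_pos n), Nat.add_sub_cancel, Ico_add_one_right_eq_Icc]
    norm_num [Nat.factorial]
  have hN := three_pow_mul_prod_rectangle m
  rw [hrange] at hN
  rw [hsq, ← hden, hfactor, sqrt_prod_factorial_div, div_pow, neg_pow]
  have hA := (prod_triangle_add_pos (2 * m)).ne'
  have hS := (prod_triangle_sub_pos (2 * m)).ne'
  generalize ∏ j ∈ Icc 1 (2 * m), ∏ i ∈ Ico 1 j, ((j : ℝ) + i) = A at *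
  generalize ∏ j ∈ Icc 1 (2 * m), ∏ i ∈ Ico 1 j, ((j : ℝ) - i) = S at *
  generalize ∏ i ∈ Icc 1 (2 * m + 1), ∏ j ∈ Icc 1 m, (1 + 3 * (2 * (j : ℝ) - (i : ℝ))) = N at *
  generalize ∏ j ∈ Icc 1 m, (3 * (j : ℝ) - 1) = B at *
  generalize ∏ k ∈ Icc 1 (m - 1), ((6 * k + 3).factorial : ℝ) / ((2 * k + 1).factorial : ℝ) = C
    at *
  have hsign : ((-1 : ℝ) ^ m)⁻¹ = (-1) ^ m := by rw [← inv_pow]; norm_num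
  have hF : ((2 * m).factorial : ℝ) ≠ 0 := by positivity
  calc _ = 3 ^ (m ^ 2) * ((-1 : ℝ) ^ m)⁻¹ * N / (4 ^ (m ^ 2) * 2 ^ m * (2 * m).factorial * A) := by
        field_simp
    _ = _ := by
        rw [hsign, hN]
        field_simp
        ring
end

section
/- Let ζ ∈ (0, π). For every real λ, sin(ζ) / ( π·(sinh²(λ) + sin²(ζ/2)) ) = 1/(ζ·cosh(πλ/ζ)) + ∫_ℝ [ sin(2ζ) / ( 2π·(sinh²(λ−μ) + sin²(ζ)) ) ] · [ 1/(ζ·cosh(πμ/ζ)) ] dμ. -/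
open Real MeasureTheory

open Filter Topology

/-- Subtracting the principal parts at finitely many simple poles leaves a function which extends
holomorphically across the poles. -/
theorem exists_differentiableOn_eq_sub_simple_poles {U : Set ℂ} (hU : IsOpen U) (S : Finset ℂ)
    (hS : ∀ p ∈ S, p ∈ U) (r : ℂ → ℂ) (f : ℂ → ℂ) (hf : DifferentiableOn ℂ f (U \ S))
    (hr : ∀ p ∈ S, Tendsto (fun z => (z - p) * f z) (𝓝[≠] p) (𝓝 (r p))) :
    ∃ F : ℂ → ℂ, DifferentiableOn ℂ F U ∧
      ∀ z ∉ S, F z = f z - ∑ p ∈ S, r p / (z - p) := by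
  classical
  induction S using Finset.induction_on generalizing f with
  | empty => exact ⟨f, by simpa using hf, by simp⟩
  | insert p S hp ih =>
    set g : ℂ → ℂ := fun z => f z - r p / (z - p) with hg
    have hopen : IsOpen (U \ (S : Set ℂ)) := hU.sdiff S.finite_toSet.isClosed
    have hpU : p ∈ U \ (S : Set ℂ) := ⟨hS p (by simp), by simpa using hp⟩
    have hgd : DifferentiableOn ℂ g ((U \ S) \ {p}) := by
      refine DifferentiableOn.sub (hf.mono ?_) ?_
      · rintro z ⟨⟨h1, h2⟩, h3⟩
        exact ⟨h1, by simpa using ⟨h3, h2⟩⟩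
      · intro z hz
        have : z - p ≠ 0 := sub_ne_zero.2 hz.2
        fun_prop (disch := assumption)
    have hzp : Tendsto (fun z : ℂ => z - p) (𝓝[≠] p) (𝓝 0) := by
      have : Tendsto (fun z : ℂ => z - p) (𝓝 p) (𝓝 (p - p)) := tendsto_id.sub_const p
      simpa using this.mono_left nhdsWithin_le_nhds
    have hlo : (fun z => g z - g p) =o[𝓝[≠] p] fun z => (z - p)⁻¹ := by
      have hne : ∀ᶠ z in 𝓝[≠] p, z ≠ p := self_mem_nhdsWithin
      rw [Asymptotics.isLittleO_iff_tendsto']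
      · have h1 := ((hr p (by simp)).sub_const (r p)).sub (hzp.mul_const (g p))
        simp only [sub_self, zero_mul] at h1
        refine h1.congr' ?_
        filter_upwards [hne] with z hz
        have : z - p ≠ 0 := sub_ne_zero.2 hz
        simp only [hg]
        field_simp
      · filter_upwards [hne] with z hz h
        simp [sub_ne_zero.2 hz] at h
    have hd := Complex.differentiableOn_update_limUnder_of_isLittleO
      (hopen.mem_nhds hpU) hgd hlo
    obtain ⟨F, hF, hFe⟩ := ih (fun q hq => hS q (by simp [hq])) _ hd (by
      intro q hq
      have hqp : q ≠ p := fun h => hp (h ▸ hq)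
      have hzq : Tendsto (fun z : ℂ => (z - q) * (r p / (z - p))) (𝓝 q) (𝓝 0) := by
        have : ContinuousAt (fun z : ℂ => (z - q) * (r p / (z - p))) q := by
          have : q - p ≠ 0 := sub_ne_zero.2 hqp
          fun_prop (disch := assumption)
        simpa [ContinuousAt] using this
      have h1 := (hr q (by simp [hq])).sub (hzq.mono_left nhdsWithin_le_nhds)
      rw [sub_zero] at h1
      refine h1.congr' ?_
      filter_upwards [nhdsWithin_le_nhds (isOpen_ne.mem_nhds hqp)] with z hz
      rw [Function.update_of_ne hz]
      simp only [hg]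
      ring)
    refine ⟨F, hF, fun z hz => ?_⟩
    simp only [Finset.mem_insert, not_or] at hz
    rw [hFe z hz.2, Function.update_of_ne hz.1, Finset.sum_insert hp]
    simp only [hg]
    ring

/-- The symmetric integrals of `1 / (x + w)` tend to `-π i` if `w` lies in the upper half-plane. -/
theorem tendsto_integral_inv_add_of_im_pos {w : ℂ} (hw : 0 < w.im) :
    Tendsto (fun T : ℝ => ∫ x in -T..T, ((x : ℂ) + w)⁻¹) atTop (𝓝 (-(π * Complex.I))) := by
  have hslit : ∀ x : ℝ, (x : ℂ) + w ∈ Complex.slitPlane := fun x =>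
    Or.inr (by simpa using hw.ne')
  have hne : ∀ x : ℝ, (x : ℂ) + w ≠ 0 := fun x => Complex.slitPlane_ne_zero (hslit x)
  have hftc : ∀ T : ℝ, ∫ x in -T..T, ((x : ℂ) + w)⁻¹ =
      Complex.log ((T : ℂ) + w) - Complex.log (((-T : ℝ) : ℂ) + w) := by
    intro T
    refine intervalIntegral.integral_eq_sub_of_hasDerivAt
      (f := fun x : ℝ => Complex.log ((x : ℂ) + w)) (fun x _ => ?_) ?_
    · have := ((Complex.ofRealCLM.hasDerivAt (x := x)).add_const w).clog_real (hslit x)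
      simpa using this
    · exact (Continuous.inv₀ (by fun_prop) hne).intervalIntegrable _ _
  have hlim : Tendsto (fun T : ℝ => w / (T : ℂ)) atTop (𝓝 0) := by
    have : Tendsto (fun T : ℝ => ((T⁻¹ : ℝ) : ℂ)) atTop (𝓝 ((0 : ℝ) : ℂ)) :=
      (Complex.continuous_ofReal.tendsto 0).comp tendsto_inv_atTop_zero
    simpa [div_eq_mul_inv] using this.const_mul w
  have h1 : Tendsto (fun T : ℝ => Complex.log (1 + w / T)) atTop (𝓝 0) := by
    have : ContinuousAt Complex.log 1 := continuousAt_clog (by simp)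
    have h := this.tendsto.comp (by simpa using hlim.const_add 1 :
      Tendsto (fun T : ℝ => 1 + w / (T : ℂ)) atTop (𝓝 1))
    simpa [Function.comp_def] using h
  have h2 : Tendsto (fun T : ℝ => Complex.log (-1 + w / T)) atTop (𝓝 (π * Complex.I)) := by
    have h := Complex.tendsto_log_nhdsWithin_im_nonneg_of_re_neg_of_im_zero
      (z := -1) (by simp) (by simp)
    have h' : Tendsto (fun T : ℝ => -1 + w / (T : ℂ)) atTop
        (𝓝[{z : ℂ | 0 ≤ z.im}] (-1)) := by
      refine tendsto_nhdsWithin_iff.2 ⟨by simpa using hlim.const_add (-1), ?_⟩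
      filter_upwards [eventually_gt_atTop 0] with T hT
      simp only [Complex.add_im, Complex.neg_im, Complex.one_im,
        Complex.div_ofReal_im]
      positivity
    simpa [Function.comp_def] using h.comp h'
  have h3 := h1.sub h2
  rw [zero_sub] at h3
  refine h3.congr' ?_
  filter_upwards [eventually_gt_atTop 0] with T hT
  have hT' : (T : ℂ) ≠ 0 := by exact_mod_cast hT.ne'
  have e1 : (T : ℂ) + w = (T : ℂ) * (1 + w / T) := by field_simp
  have e2 : ((-T : ℝ) : ℂ) + w = (T : ℂ) * (-1 + w / T) := by push_cast; field_simp
  have n1 : 1 + w / (T : ℂ) ≠ 0 := fun h => hne T (by rw [e1, h, mul_zero])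
  have n2 : -1 + w / (T : ℂ) ≠ 0 := fun h => hne (-T) (by rw [e2, h, mul_zero])
  rw [hftc, e1, e2, Complex.log_ofReal_mul hT n1, Complex.log_ofReal_mul hT n2]
  ring

/-- The symmetric integrals of `1 / (x + w)` tend to `π i` if `w` lies in the lower half-plane. -/
theorem tendsto_integral_inv_add_of_im_neg {w : ℂ} (hw : w.im < 0) :
    Tendsto (fun T : ℝ => ∫ x in -T..T, ((x : ℂ) + w)⁻¹) atTop (𝓝 (π * Complex.I)) := by
  have h := (tendsto_integral_inv_add_of_im_pos (w := -w) (by simpa using hw)).neg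
  rw [neg_neg] at h
  refine h.congr fun T => ?_
  rw [← intervalIntegral.integral_neg]
  have := intervalIntegral.integral_comp_neg (a := -T) (b := T)
    (fun x : ℝ => ((x : ℂ) + w)⁻¹)
  rw [neg_neg] at this
  rw [← this]
  congr 1
  ext x
  push_cast
  rw [← inv_neg]
  congr 1
  ring

/-- **Residue theorem for a horizontal strip**: for a function with finitely many simple poles in
the open strip `|Im z| < b` which decays towards the ends of the closed strip, the difference of
the integrals along the two boundary lines is `2πi` times the sum of the residues. -/
theorem tendsto_integral_strip_of_simple_poles {b b' : ℝ} (hb : 0 ≤ b) (hbb' : b < b')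
    (S : Finset ℂ) (hS : ∀ p ∈ S, |p.im| < b) (r f : ℂ → ℂ)
    (hf : DifferentiableOn ℂ f ({z | |z.im| < b'} \ S))
    (hr : ∀ p ∈ S, Tendsto (fun z => (z - p) * f z) (𝓝[≠] p) (𝓝 (r p)))
    (ε : ℝ → ℝ) (hε : Tendsto ε atTop (𝓝 0))
    (hfε : ∀ᶠ T in atTop, ∀ z : ℂ, |z.re| = T → |z.im| ≤ b → ‖f z‖ ≤ ε T) :
    Tendsto (fun T : ℝ => ∫ x in -T..T, (f (x - b * Complex.I) - f (x + b * Complex.I)))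
      atTop (𝓝 (2 * π * Complex.I * ∑ p ∈ S, r p)) := by
  have hU : IsOpen {z : ℂ | |z.im| < b'} :=
    isOpen_lt (by fun_prop) (by fun_prop)
  obtain ⟨F, hF, hFe⟩ := exists_differentiableOn_eq_sub_simple_poles hU S
    (fun p hp => (hS p hp).trans hbb') r f hf hr
  have hrect : ∀ T : ℝ, (∫ x in -T..T, F (x - b * Complex.I)) -
      (∫ x in -T..T, F (x + b * Complex.I)) =
      Complex.I * (∫ y in -b..b, F ((-T : ℝ) + y * Complex.I)) -
        Complex.I * (∫ y in -b..b, F (T + y * Complex.I)) := by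
    intro T
    have h := Complex.integral_boundary_rect_eq_zero_of_differentiableOn F
      ⟨-T, -b⟩ ⟨T, b⟩ (hF.mono fun z hz => by
        have h2 : z.im ∈ Set.uIcc (-b) b := hz.2
        rw [Set.uIcc_of_le (by linarith)] at h2
        exact (abs_le.2 h2).trans_lt hbb')
    simp only [smul_eq_mul, Complex.ofReal_neg, neg_mul, ← sub_eq_add_neg] at h
    push_cast
    linear_combination h
  have hcont : ∀ c : ℝ, |c| ≤ b → Continuous fun x : ℝ => F (x + c * Complex.I) := by
    intro c hc
    refine hF.continuousOn.comp_continuous (by fun_prop) fun x => ?_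
    simpa using hc.trans_lt hbb'
  have hnot : ∀ (c x : ℝ), b = |c| → (x : ℂ) + c * Complex.I ∉ S := by
    intro c x hc h
    have := hS _ h
    simp [hc] at this
  have hden : ∀ p ∈ S, ∀ (c x : ℝ), b = |c| → (x : ℂ) + (c * Complex.I - p) ≠ 0 := by
    intro p hp c x hc h
    refine hnot c x hc ?_
    have : (x : ℂ) + c * Complex.I = p := by linear_combination h
    rwa [this]
  have hint : ∀ p ∈ S, ∀ (c T : ℝ), b = |c| →
      IntervalIntegrable (fun x : ℝ => ((x : ℂ) + (c * Complex.I - p))⁻¹) volume (-T) T :=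
    fun p hp c T hc =>
      (Continuous.inv₀ (by fun_prop) fun x => hden p hp c x hc).intervalIntegrable _ _
  have hline : ∀ c T : ℝ, b = |c| → IntervalIntegrable
      (fun x : ℝ => f (x + c * Complex.I)) volume (-T) T ∧
      ∫ x in -T..T, f (x + c * Complex.I) = (∫ x in -T..T, F (x + c * Complex.I)) +
        ∑ p ∈ S, r p * ∫ x in -T..T, ((x : ℂ) + (c * Complex.I - p))⁻¹ := by
    intro c T hc
    have e : (fun x : ℝ => f (x + c * Complex.I)) = fun x : ℝ => F (x + c * Complex.I) +
        ∑ p ∈ S, r p * ((x : ℂ) + (c * Complex.I - p))⁻¹ := by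
      ext x
      rw [hFe _ (hnot c x hc)]
      simp only [div_eq_mul_inv, add_sub_assoc, sub_add_cancel]
    have i1 := (hcont c hc.ge).intervalIntegrable (μ := volume) (-T) T
    have i2 : ∀ p ∈ S, IntervalIntegrable
        (fun x : ℝ => r p * ((x : ℂ) + (c * Complex.I - p))⁻¹) volume (-T) T :=
      fun p hp => (hint p hp c T hc).const_mul _
    have i3 : IntervalIntegrable (fun x : ℝ =>
        ∑ p ∈ S, r p * ((x : ℂ) + (c * Complex.I - p))⁻¹) volume (-T) T := by
      simpa [Finset.sum_fn] using IntervalIntegrable.sum S i2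
    rw [e]
    refine ⟨i1.add i3, ?_⟩
    rw [intervalIntegral.integral_add i1 i3, intervalIntegral.integral_finsetSum i2]
    simp only [intervalIntegral.integral_const_mul]
  set δ : ℝ → ℝ := fun T => ε T + ∑ p ∈ S, ‖r p‖ / (T - |p.re|) with hδ
  have hδlim : Tendsto δ atTop (𝓝 0) := by
    have : Tendsto (fun T : ℝ => ∑ p ∈ S, ‖r p‖ / (T - |p.re|)) atTop
        (𝓝 (∑ p ∈ S, (0 : ℝ))) :=
      tendsto_finsetSum S fun p _ =>
        tendsto_const_nhds.div_atTop (tendsto_atTop_add_const_right _ _ tendsto_id)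
    simpa using hε.add this
  have hFδ : ∀ᶠ T in atTop, ∀ z : ℂ, |z.re| = T → |z.im| ≤ b → ‖F z‖ ≤ δ T := by
    have hlarge : ∀ᶠ T : ℝ in atTop, ∀ p ∈ S, |p.re| < T :=
      (Finset.eventually_all S).2 fun p _ => eventually_gt_atTop _
    filter_upwards [hfε, hlarge] with T hT hTS z hz hzb
    have hzS : z ∉ S := fun h => (hTS z h).ne hz
    rw [hFe z hzS]
    refine (norm_sub_le _ _).trans (add_le_add (hT z hz hzb) ?_)
    refine (norm_sum_le _ _).trans (Finset.sum_le_sum fun p hp => ?_)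
    rw [norm_div]
    have h1 : T - |p.re| ≤ ‖z - p‖ := by
      have h2 := Complex.abs_re_le_norm (z - p)
      have h3 := abs_sub_abs_le_abs_sub z.re p.re
      rw [Complex.sub_re] at h2
      linarith
    exact div_le_div_of_nonneg_left (norm_nonneg _) (sub_pos.2 (hTS p hp)) h1
  have hvert : Tendsto (fun T : ℝ => Complex.I * (∫ y in -b..b, F ((-T : ℝ) + y * Complex.I)) -
        Complex.I * (∫ y in -b..b, F (T + y * Complex.I))) atTop (𝓝 0) := by
    have hlim : Tendsto (fun T => δ T * |b - -b| + δ T * |b - -b|) atTop (𝓝 0) := by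
      simpa using (hδlim.mul_const |b - -b|).add (hδlim.mul_const |b - -b|)
    refine squeeze_zero_norm' ?_ hlim
    filter_upwards [hFδ, eventually_ge_atTop 0] with T hT hT0
    have hside : ∀ s : ℝ, |s| = T →
        ‖Complex.I * ∫ y in -b..b, F ((s : ℂ) + y * Complex.I)‖ ≤ δ T * |b - -b| := by
      intro s hs
      rw [norm_mul, Complex.norm_I, one_mul]
      refine intervalIntegral.norm_integral_le_of_norm_le_const fun y hy => ?_
      rw [Set.uIoc_of_le (by linarith)] at hy
      exact hT _ (by simpa using hs) (by simpa using abs_le.2 ⟨hy.1.le, hy.2⟩)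
    exact (norm_sub_le _ _).trans
      (add_le_add (hside _ (by rw [abs_neg, abs_of_nonneg hT0])) (hside _ (abs_of_nonneg hT0)))
  have hpoles : Tendsto (fun T : ℝ =>
      ∑ p ∈ S, r p * (∫ x in -T..T, ((x : ℂ) + ((-b : ℝ) * Complex.I - p))⁻¹) -
      ∑ p ∈ S, r p * (∫ x in -T..T, ((x : ℂ) + (b * Complex.I - p))⁻¹)) atTop
      (𝓝 (∑ p ∈ S, r p * (π * Complex.I) - ∑ p ∈ S, r p * (-(π * Complex.I)))) := by
    refine Tendsto.sub (tendsto_finsetSum S fun p hp => ?_) (tendsto_finsetSum S fun p hp => ?_)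
    · refine (tendsto_integral_inv_add_of_im_neg ?_).const_mul _
      have := (abs_lt.1 (hS p hp)).1
      simp
      linarith
    · refine (tendsto_integral_inv_add_of_im_pos ?_).const_mul _
      have := (abs_lt.1 (hS p hp)).2
      simp
      linarith
  have hlim := hvert.add hpoles
  have hval : (0 : ℂ) + (∑ p ∈ S, r p * (π * Complex.I) - ∑ p ∈ S, r p * (-(π * Complex.I))) =
      2 * π * Complex.I * ∑ p ∈ S, r p := by
    rw [← Finset.sum_mul, ← Finset.sum_mul]
    ring
  rw [hval] at hlim
  refine hlim.congr fun T => ?_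
  obtain ⟨iu, eu⟩ := hline b T (abs_of_nonneg hb).symm
  obtain ⟨il, el⟩ := hline (-b) T (by rw [abs_neg, abs_of_nonneg hb])
  simp only [Complex.ofReal_neg b, neg_mul, ← sub_eq_add_neg] at il el ⊢
  rw [intervalIntegral.integral_sub il iu, el, eu, ← hrect T]
  ring

/-- The residue of `N / D` at a simple zero `p` of `D` is `N p / D' p`. -/
theorem tendsto_sub_mul_div_of_hasDerivAt {N D : ℂ → ℂ} {p D' : ℂ} (hN : ContinuousAt N p)
    (hD : HasDerivAt D D' p) (h0 : D p = 0) (hD' : D' ≠ 0) :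
    Tendsto (fun z => (z - p) * (N z / D z)) (𝓝[≠] p) (𝓝 (N p / D')) := by
  have h := (hN.tendsto.mono_left nhdsWithin_le_nhds).div (hasDerivAt_iff_tendsto_slope.1 hD) hD'
  refine h.congr fun z => ?_
  rw [Pi.div_apply, slope_def_field, h0, sub_zero, div_div_eq_mul_div]
  ring

theorem norm_cosh_le_cosh_re (z : ℂ) : ‖Complex.cosh z‖ ≤ Real.cosh z.re := by
  rw [Complex.cosh, norm_div, Real.cosh_eq]
  have := norm_add_le (Complex.exp z) (Complex.exp (-z))
  simp only [Complex.norm_exp, Complex.neg_re] at this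
  simp only [Complex.norm_ofNat]
  linarith

theorem abs_sinh_re_le_norm_cosh (z : ℂ) : |Real.sinh z.re| ≤ ‖Complex.cosh z‖ := by
  rw [Complex.cosh, norm_div, Real.sinh_eq, abs_div]
  have := abs_norm_sub_norm_le (Complex.exp z) (-Complex.exp (-z))
  simp only [norm_neg, Complex.norm_exp, Complex.neg_re, sub_neg_eq_add] at this
  simp only [Complex.norm_ofNat, Nat.abs_ofNat]
  linarith

theorem abs_sinh_re_le_norm_sinh (z : ℂ) : |Real.sinh z.re| ≤ ‖Complex.sinh z‖ := by
  rw [Complex.sinh, norm_div, Real.sinh_eq, abs_div]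
  have := abs_norm_sub_norm_le (Complex.exp z) (Complex.exp (-z))
  simp only [Complex.norm_exp, Complex.neg_re] at this
  simp only [Complex.norm_ofNat, Nat.abs_ofNat]
  linarith

theorem eq_zero_of_sinh_eq_zero_of_abs_im_lt {z : ℂ} (h : Complex.sinh z = 0)
    (hz : |z.im| < π) : z = 0 := by
  have h1 : Complex.sin (z * Complex.I) = 0 := by rw [Complex.sin_mul_I, h, zero_mul]
  obtain ⟨k, hk⟩ := Complex.sin_eq_zero_iff.1 h1
  have him : z.im = -(k * π) := by simpa [neg_eq_iff_eq_neg] using congrArg Complex.re hk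
  have hk0 : k = 0 := by
    rw [him, abs_neg, abs_mul, abs_of_pos pi_pos] at hz
    have : |(k : ℝ)| < 1 := by
      by_contra! h
      nlinarith [pi_pos]
    exact Int.abs_lt_one_iff.1 (by exact_mod_cast this)
  simpa [hk0] using hk

theorem eq_or_eq_of_cosh_eq_zero_of_abs_im_lt {z : ℂ} (h : Complex.cosh z = 0)
    (hz : |z.im| < 3 * π / 2) : z = π / 2 * Complex.I ∨ z = -(π / 2 * Complex.I) := by
  have h1 : Complex.cos (z * Complex.I) = 0 := by rw [Complex.cos_mul_I, h]
  obtain ⟨k, hk⟩ := Complex.cos_eq_zero_iff.1 h1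
  have hz' : z = -((2 * k + 1) * π / 2) * Complex.I := by
    linear_combination -Complex.I * hk + z * Complex.I_sq
  have him : z.im = -((2 * k + 1) * π / 2) := by
    have : z = ((-((2 * k + 1) * π / 2) : ℝ) : ℂ) * Complex.I := by rw [hz']; push_cast; rfl
    rw [this]; simp
  rw [him, abs_neg, abs_lt] at hz
  have hk1 : (-2 : ℝ) < k := by
    by_contra! h
    nlinarith [pi_pos]
  have hk2 : (k : ℝ) < 1 := by
    by_contra! h
    nlinarith [pi_pos]
  have hk1' : -2 < k := by exact_mod_cast hk1
  have hk2' : k < 1 := by exact_mod_cast hk2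
  obtain rfl | rfl : k = 0 ∨ k = -1 := by omega
  · right; rw [hz']; push_cast; ring
  · left; rw [hz']; push_cast; ring

theorem cosh_div_sinh_sub_sub_cosh_div_sinh_add (u : ℝ) {a : ℝ} (ha : Real.sin a ≠ 0) :
    Complex.cosh (u - a * Complex.I) / Complex.sinh (u - a * Complex.I) -
        Complex.cosh (u + a * Complex.I) / Complex.sinh (u + a * Complex.I) =
      Complex.I * ((Real.sin (2 * a) / (Real.sinh u ^ 2 + Real.sin a ^ 2) : ℝ) : ℂ) := by
  have hpos : Real.sinh u ^ 2 + Real.sin a ^ 2 ≠ 0 := by positivity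
  have hprod : Complex.sinh (u - a * Complex.I) * Complex.sinh (u + a * Complex.I) =
      ((Real.sinh u ^ 2 + Real.sin a ^ 2 : ℝ) : ℂ) := by
    rw [Complex.sinh_sub, Complex.sinh_add, Complex.cosh_mul_I, Complex.sinh_mul_I]
    push_cast
    have h1 := Complex.cosh_sq (u : ℂ)
    have h2 := Complex.sin_sq_add_cos_sq (a : ℂ)
    linear_combination Complex.sinh (u : ℂ) ^ 2 * h2 + Complex.sin (a : ℂ) ^ 2 * h1 -
      Complex.cosh (u : ℂ) ^ 2 * Complex.sin (a : ℂ) ^ 2 * Complex.I_sq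
  have hne : Complex.sinh (u - a * Complex.I) * Complex.sinh (u + a * Complex.I) ≠ 0 := by
    rw [hprod]; exact_mod_cast hpos
  have hnum : Complex.cosh (u - a * Complex.I) * Complex.sinh (u + a * Complex.I) -
      Complex.sinh (u - a * Complex.I) * Complex.cosh (u + a * Complex.I) =
      Complex.I * (Real.sin (2 * a) : ℝ) := by
    have h := Complex.sinh_sub (u + a * Complex.I) (u - a * Complex.I)
    have e : (u : ℂ) + a * Complex.I - (u - a * Complex.I) = (2 * a) * Complex.I := by ring
    rw [e, Complex.sinh_mul_I] at h
    push_cast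
    linear_combination -h
  rw [div_sub_div _ _ (left_ne_zero_of_mul hne) (right_ne_zero_of_mul hne), hnum, hprod]
  push_cast
  ring

theorem integrable_inv_cosh_mul {c : ℝ} (hc : c ≠ 0) :
    Integrable fun x : ℝ => (Real.cosh (c * x))⁻¹ := by
  suffices h : Integrable fun x : ℝ => (Real.cosh x)⁻¹ from h.comp_mul_left' hc
  refine (integrable_inv_one_add_sq.const_mul 2).mono'
    (Continuous.inv₀ (by fun_prop) fun x => (Real.cosh_pos x).ne').aestronglyMeasurable
    (ae_of_all _ fun x => ?_)
  have h1 : (1 + x ^ 2) / 2 ≤ Real.cosh x := by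
    have h2 : Real.cosh x = 1 + 2 * Real.sinh (x / 2) ^ 2 := by
      have h3 := Real.cosh_two_mul (x / 2)
      have h4 := Real.cosh_sq (x / 2)
      rw [mul_div_cancel₀ x two_ne_zero] at h3
      linarith
    have h5 : (x / 2) ^ 2 ≤ Real.sinh (x / 2) ^ 2 := sq_le_sq.2 (by
      rw [Real.abs_sinh]; exact Real.self_le_sinh_iff.2 (abs_nonneg _))
    nlinarith
  rw [Real.norm_of_nonneg (by positivity)]
  calc (Real.cosh x)⁻¹ ≤ ((1 + x ^ 2) / 2)⁻¹ := inv_anti₀ (by positivity) h1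
    _ = 2 * (1 + x ^ 2)⁻¹ := by field_simp

/-- The symmetric-limit form of the contour evaluation of `∫ coth(λ - z) / (ζ cosh(πz/ζ)) dz`
around the strip `|Im z| ≤ ζ`. -/
theorem tendsto_integral_coth_div_cosh_strip {ζ : ℝ} (hζ : ζ ∈ Set.Ioo 0 π) (lam : ℝ)
    {G : ℂ → ℂ} (hG : G = fun z => Complex.cosh (lam - z) /
      (Complex.sinh (lam - z) * (ζ * Complex.cosh (π / ζ * z)))) :
    Tendsto (fun T : ℝ => ∫ x in -T..T, (G (x - ζ * Complex.I) - G (x + ζ * Complex.I))) atTop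
      (𝓝 (2 * π * Complex.I *
        ((Real.sin ζ / (π * (Real.sinh lam ^ 2 + Real.sin (ζ / 2) ^ 2)) -
          1 / (ζ * Real.cosh (π * lam / ζ)) : ℝ) : ℂ))) := by
  obtain ⟨h0, hπ⟩ := hζ
  have hζC : (ζ : ℂ) ≠ 0 := by exact_mod_cast h0.ne'
  have hπC : (π : ℂ) ≠ 0 := by exact_mod_cast pi_ne_zero
  obtain ⟨b', hb1, hb2⟩ := exists_between (lt_min hπ (by linarith : ζ < 3 * ζ / 2))
  obtain ⟨hbπ, hb3⟩ := lt_min_iff.1 hb2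
  set q : ℂ := ζ / 2 * Complex.I with hq
  have hqim : q.im = ζ / 2 := by simp [hq]
  have hlq : (lam : ℂ) ≠ q := fun h => by
    have := congrArg Complex.im h
    rw [hqim, Complex.ofReal_im] at this
    linarith
  have hlq' : (lam : ℂ) ≠ -q := fun h => by
    have := congrArg Complex.im h
    rw [Complex.neg_im, hqim, Complex.ofReal_im] at this
    linarith
  have hqq : q ≠ -q := fun h => by
    have := congrArg Complex.im h
    rw [Complex.neg_im, hqim] at this
    linarith
  set D : ℂ → ℂ := fun z => Complex.sinh (lam - z) * (ζ * Complex.cosh (π / ζ * z)) with hD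
  set D' : ℂ → ℂ := fun z => -Complex.cosh (lam - z) * (ζ * Complex.cosh (π / ζ * z)) +
    Complex.sinh (lam - z) * (π * Complex.sinh (π / ζ * z)) with hD'
  have hDderiv : ∀ z, HasDerivAt D (D' z) z := by
    intro z
    have h1 : HasDerivAt (fun z : ℂ => Complex.sinh (lam - z)) (-Complex.cosh (lam - z)) z := by
      simpa using ((hasDerivAt_id z).const_sub (lam : ℂ)).csinh
    have h2 : HasDerivAt (fun z : ℂ => ζ * Complex.cosh (π / ζ * z))
        (π * Complex.sinh (π / ζ * z)) z := by
      refine ((((hasDerivAt_id z).const_mul (π / ζ : ℂ)).ccosh).const_mul (ζ : ℂ)).congr_deriv ?_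
      simp only [id]
      field_simp
    exact h1.mul h2
  have hpq : (π / ζ : ℂ) * q = π / 2 * Complex.I := by rw [hq]; field_simp
  have hcq : Complex.cosh (π / ζ * q) = 0 := by
    rw [hpq, Complex.cosh_mul_I, Complex.cos_pi_div_two]
  have hsq : Complex.sinh (π / ζ * q) = Complex.I := by
    rw [hpq, Complex.sinh_mul_I, Complex.sin_pi_div_two, one_mul]
  have hcl : ((ζ : ℂ) * Complex.cosh (π / ζ * lam)) ≠ 0 := by
    refine mul_ne_zero hζC ?_
    have := (Real.cosh_pos (π / ζ * lam)).ne'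
    exact_mod_cast this
  have hshift : ∀ s : ℂ, s ≠ lam → |s.im| < π → Complex.sinh (lam - s) ≠ 0 := by
    intro s hs him h
    have := eq_zero_of_sinh_eq_zero_of_abs_im_lt h (by simpa using him)
    exact hs (sub_eq_zero.1 this).symm
  have hsinhq : Complex.sinh (lam - q) ≠ 0 := hshift q hlq.symm (by
    rw [hqim, abs_of_pos (by linarith)]; linarith)
  have hsinhq' : Complex.sinh (lam - -q) ≠ 0 := hshift (-q) hlq'.symm (by
    rw [Complex.neg_im, hqim, abs_neg, abs_of_pos (by linarith)]; linarith)
  have hDl : D' lam = -(ζ * Complex.cosh (π / ζ * lam)) := by simp [hD']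
  have hDq : D' q = Complex.sinh (lam - q) * (π * Complex.I) := by simp [hD', hcq, hsq]
  have hDq' : D' (-q) = -(Complex.sinh (lam - -q) * (π * Complex.I)) := by
    simp [hD', hcq, hsq]
  have hnz : ∀ z : ℂ, |z.im| < b' → z ≠ lam → z ≠ q → z ≠ -q → D z ≠ 0 := by
    intro z hz h1 h2 h3
    refine mul_ne_zero (hshift z h1 (hz.trans hbπ)) (mul_ne_zero hζC fun h => ?_)
    have him : ((π / ζ : ℂ) * z).im = π / ζ * z.im := by
      rw [← Complex.ofReal_div, Complex.im_ofReal_mul]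
    have hzq : ∀ w, (π / ζ : ℂ) * z = π / ζ * w → z = w := fun w hw =>
      mul_left_cancel₀ (div_ne_zero hπC hζC) hw
    rcases eq_or_eq_of_cosh_eq_zero_of_abs_im_lt h (by
      rw [him, abs_mul, abs_of_pos (by positivity), div_mul_eq_mul_div, div_lt_iff₀ h0]
      nlinarith [pi_pos]) with h | h
    · exact h2 (hzq _ (by rw [h, hpq]))
    · exact h3 (hzq _ (by rw [h, mul_neg, hpq]))
  have hres := tendsto_integral_strip_of_simple_poles h0.le hb1 {(lam : ℂ), q, -q} (by
      intro p hp
      simp only [Finset.mem_insert, Finset.mem_singleton] at hp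
      rcases hp with rfl | rfl | rfl
      · simpa using h0
      · rw [hqim, abs_of_pos (by linarith)]; linarith
      · rw [Complex.neg_im, hqim, abs_neg, abs_of_pos (by linarith)]; linarith)
    (fun p => Complex.cosh (lam - p) / D' p) G (by
      rintro z ⟨hz, hzS⟩
      simp only [Finset.coe_insert, Finset.coe_singleton, Set.mem_insert_iff,
        Set.mem_singleton_iff, not_or] at hzS
      have hzD := hnz z hz hzS.1 hzS.2.1 hzS.2.2
      rw [hG]
      exact (DifferentiableAt.div (by fun_prop) (hDderiv z).differentiableAt
        hzD).differentiableWithinAt) (by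
      intro p hp
      simp only [Finset.mem_insert, Finset.mem_singleton] at hp
      rw [hG]
      refine tendsto_sub_mul_div_of_hasDerivAt (N := fun z => Complex.cosh (lam - z))
        (by fun_prop) (hDderiv p) ?_ ?_
      · rcases hp with rfl | rfl | rfl <;> simp [hcq]
      · rcases hp with rfl | rfl | rfl
        · rw [hDl]; exact neg_ne_zero.2 hcl
        · rw [hDq]; exact mul_ne_zero hsinhq (mul_ne_zero hπC Complex.I_ne_zero)
        · rw [hDq']
          exact neg_ne_zero.2 (mul_ne_zero hsinhq' (mul_ne_zero hπC Complex.I_ne_zero)))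
    (fun T => 2 / (π * T))
    (tendsto_const_nhds.div_atTop (tendsto_id.const_mul_atTop pi_pos)) (by
      filter_upwards [eventually_ge_atTop (|lam| + 1)] with T hT z hz _
      have hTpos : 0 < T := by linarith [abs_nonneg lam]
      have hu : 1 ≤ |((lam : ℂ) - z).re| := by
        have := abs_sub_abs_le_abs_sub z.re lam
        rw [abs_sub_comm] at this
        rw [Complex.sub_re, Complex.ofReal_re]
        linarith
      have hle : ∀ x : ℝ, |x| ≤ |Real.sinh x| := fun x => by
        rw [Real.abs_sinh]; exact Real.self_le_sinh_iff.2 (abs_nonneg _)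
      have hsinh := abs_sinh_re_le_norm_sinh (lam - z)
      have hcoth : ‖Complex.cosh (lam - z)‖ ≤ 2 * ‖Complex.sinh (lam - z)‖ := by
        have h1 := norm_cosh_le_cosh_re (lam - z)
        have h2 := hle ((lam : ℂ) - z).re
        have h3 : Real.cosh ((lam : ℂ) - z).re ≤ 2 * |Real.sinh ((lam : ℂ) - z).re| := by
          refine le_of_sq_le_sq ?_ (by positivity)
          rw [Real.cosh_sq, mul_pow, sq_abs]
          nlinarith [sq_abs (Real.sinh ((lam : ℂ) - z).re)]
        linarith
      have hsinh0 : 0 < ‖Complex.sinh (lam - z)‖ := by linarith [hle ((lam : ℂ) - z).re]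
      have hden : π * T ≤ ‖(ζ : ℂ) * Complex.cosh (π / ζ * z)‖ := by
        have h1 := abs_sinh_re_le_norm_cosh (π / ζ * z)
        have h2 := hle ((π / ζ : ℂ) * z).re
        have h3 : ((π / ζ : ℂ) * z).re = π / ζ * z.re := by
          rw [← Complex.ofReal_div, Complex.re_ofReal_mul]
        have h4 : |((π / ζ : ℂ) * z).re| = π / ζ * T := by
          rw [h3, abs_mul, hz, abs_of_pos (by positivity)]
        rw [norm_mul, Complex.norm_real, Real.norm_of_nonneg h0.le]
        calc π * T = ζ * (π / ζ * T) := by field_simp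
          _ ≤ _ := by gcongr; linarith
      rw [hG]
      simp only [norm_div]
      rw [norm_mul, ← div_div]
      exact div_le_div₀ zero_le_two ((div_le_iff₀ hsinh0).2 hcoth) (by positivity) hden)
  convert! hres using 3
  rw [Finset.sum_insert (by simp [hlq, hlq']), Finset.sum_pair hqq, hDl, hDq, hDq']
  have hcoth := cosh_div_sinh_sub_sub_cosh_div_sinh_add lam
    (Real.sin_pos_of_pos_of_lt_pi (half_pos h0) (by linarith)).ne'
  have hqcast : ((ζ / 2 : ℝ) : ℂ) * Complex.I = q := by rw [hq]; push_cast; rfl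
  rw [hqcast, mul_div_cancel₀ ζ two_ne_zero, ← sub_neg_eq_add (lam : ℂ) q] at hcoth
  have e1 : (lam : ℂ) - lam = 0 := sub_self _
  have e2 : ((1 / (ζ * Real.cosh (π * lam / ζ)) : ℝ) : ℂ) =
      1 / (ζ * Complex.cosh (π / ζ * lam)) := by
    push_cast
    rw [div_mul_eq_mul_div]
  have e3 : ((Real.sin ζ / (π * (Real.sinh lam ^ 2 + Real.sin (ζ / 2) ^ 2)) : ℝ) : ℂ) =
      1 / (π * Complex.I) * (Complex.I *
        ((Real.sin ζ / (Real.sinh lam ^ 2 + Real.sin (ζ / 2) ^ 2) : ℝ) : ℂ)) := by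
    rw [mul_comm π, ← div_div]
    push_cast
    field_simp [Complex.I_ne_zero]
  rw [Complex.ofReal_sub, e2, e3, ← hcoth, e1, Complex.cosh_zero, ← div_div, ← div_div,
    div_neg, div_neg, ← div_div]
  ring

/-- The function `ρ(λ) = 1/(ζ cosh(πλ/ζ))` solves the Lieb integral equation of the
massless XXZ chain, written here in purely real form:
`sin ζ/(π(sinh²λ + sin²(ζ/2))) = ρ(λ) + ∫_ℝ K(λ−μ) ρ(μ) dμ` with
`K(λ) = sin(2ζ)/(2π(sinh²λ + sin²ζ))`. -/
theorem lieb_equation_solution (ζ : ℝ) (hζ : ζ ∈ Set.Ioo 0 π) (lam : ℝ) :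
    Real.sin ζ / (π * (Real.sinh lam ^ 2 + Real.sin (ζ / 2) ^ 2)) =
      1 / (ζ * Real.cosh (π * lam / ζ)) +
      ∫ μ : ℝ,
        (Real.sin (2 * ζ) / (2 * π * (Real.sinh (lam - μ) ^ 2 + Real.sin ζ ^ 2))) *
          (1 / (ζ * Real.cosh (π * μ / ζ))) := by

  have hG := tendsto_integral_coth_div_cosh_strip hζ lam rfl
  obtain ⟨h0, hπ⟩ := hζ
  have hsin : Real.sin ζ ≠ 0 := (Real.sin_pos_of_pos_of_lt_pi h0 hπ).ne'
  set k : ℝ → ℝ := fun μ =>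
    (Real.sin (2 * ζ) / (2 * π * (Real.sinh (lam - μ) ^ 2 + Real.sin ζ ^ 2))) *
      (1 / (ζ * Real.cosh (π * μ / ζ))) with hk
  have hkint : Integrable k := by
    have hρ : Integrable fun μ : ℝ => 1 / (ζ * Real.cosh (π * μ / ζ)) := by
      refine ((integrable_inv_cosh_mul (div_pos pi_pos h0).ne').const_mul ζ⁻¹).congr
        (ae_of_all _ fun μ => ?_)
      simp only [one_div, mul_inv, div_mul_eq_mul_div]
    have hne : ∀ μ : ℝ, 2 * π * (Real.sinh (lam - μ) ^ 2 + Real.sin ζ ^ 2) ≠ 0 := fun μ => by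
      positivity
    refine hρ.bdd_mul (c := |Real.sin (2 * ζ)| / (2 * π * Real.sin ζ ^ 2))
      (Continuous.div (by fun_prop) (by fun_prop) hne).aestronglyMeasurable
      (ae_of_all _ fun μ => ?_)
    rw [norm_div, Real.norm_eq_abs, Real.norm_of_nonneg (by positivity)]
    gcongr
    exact le_add_of_nonneg_left (sq_nonneg _)
  have hlim : Tendsto (fun T : ℝ => 2 * π * Complex.I * ((∫ μ in -T..T, k μ : ℝ) : ℂ)) atTop
      (𝓝 (2 * π * Complex.I * ((∫ μ, k μ : ℝ) : ℂ))) :=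
    ((Complex.continuous_ofReal.tendsto _).comp (intervalIntegral_tendsto_integral hkint
      tendsto_neg_atTop_atBot tendsto_id)).const_mul _
  have heq := tendsto_nhds_unique hlim (hG.congr fun T => by
    rw [← intervalIntegral.integral_ofReal, ← intervalIntegral.integral_const_mul]
    congr 1
    ext x
    have hζC : (ζ : ℂ) ≠ 0 := by exact_mod_cast h0.ne'
    have hcosh : ∀ s : ℂ, Complex.cosh (s + π * Complex.I) = -Complex.cosh s ∧
        Complex.cosh (s - π * Complex.I) = -Complex.cosh s := fun s => by
      simp [Complex.cosh_add, Complex.cosh_sub, Complex.cosh_mul_I, Complex.sinh_mul_I]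
    have e1 : (π / ζ : ℂ) * (x - ζ * Complex.I) = π * x / ζ - π * Complex.I := by field_simp
    have e2 : (π / ζ : ℂ) * (x + ζ * Complex.I) = π * x / ζ + π * Complex.I := by field_simp
    have e3 : (lam : ℂ) - (x - ζ * Complex.I) = (lam - x : ℝ) + ζ * Complex.I := by
      push_cast; ring
    have e4 : (lam : ℂ) - (x + ζ * Complex.I) = (lam - x : ℝ) - ζ * Complex.I := by
      push_cast; ring
    have hcoth := cosh_div_sinh_sub_sub_cosh_div_sinh_add (lam - x) hsin
    have hkx : (k x : ℂ) = 1 / (2 * π) *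
        ((Real.sin (2 * ζ) / (Real.sinh (lam - x) ^ 2 + Real.sin ζ ^ 2) : ℝ) : ℂ) *
        (1 / (ζ * Complex.cosh (π * x / ζ))) := by
      simp only [hk]
      push_cast
      rw [← div_div]
      ring
    have hπC : (π : ℂ) ≠ 0 := by exact_mod_cast pi_ne_zero
    rw [e1, e2, e3, e4, (hcosh _).1, (hcosh _).2, hkx]
    have e5 : 2 * π * Complex.I * (1 / (2 * π) *
        ((Real.sin (2 * ζ) / (Real.sinh (lam - x) ^ 2 + Real.sin ζ ^ 2) : ℝ) : ℂ) *
        (1 / (ζ * Complex.cosh (π * x / ζ)))) = Complex.I *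
        ((Real.sin (2 * ζ) / (Real.sinh (lam - x) ^ 2 + Real.sin ζ ^ 2) : ℝ) : ℂ) *
        (1 / (ζ * Complex.cosh (π * x / ζ))) := by
      field_simp
    rw [e5, ← hcoth]
    ring)
  have h2πI : (2 * π * Complex.I : ℂ) ≠ 0 := Complex.two_pi_I_ne_zero
  have hreal := Complex.ofReal_injective (mul_left_cancel₀ h2πI heq)
  linarith
end

section
/- Let m ≥ 1 and 0 ≤ s ≤ m, and let w : ℝ → ℝ be Lebesgue integrable and supported on [−1,1]. Suppose Π_0, Π_1, ..., Π_{m−1} are monic real polynomials with deg Π_k = k satisfying the orthogonality relations ∫_{−1}^{1} Π_k(x)·x^j·w(x) dx = 0 for all 0 ≤ j < k ≤ m−1. Let L_1, ..., L_s : ℝ[X] → ℝ be linear maps. Define the m×m real matrix R̃ by R̃_{jk} = ∫_{−1}^{1} x^{j+k−2} w(x) dx for 1 ≤ j ≤ m−s and 1 ≤ k ≤ m, and R̃_{m−s+t, k} = L_t(X^{k−1}) for 1 ≤ t ≤ s and 1 ≤ k ≤ m. Let H be the (m−s)×(m−s) Hankel matrix H_{jk} = ∫_{−1}^{1} x^{j+k−2}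 w(x) dx. Then det R̃ = det H · det_s[ L_t( Π_{m−s+k−1} ) ]_{1≤t,k≤s}. -/
open MeasureTheory Polynomial

/-- Replacing the monomials by monic polynomials of the same degrees does not change the
determinant of the values of a family of linear functionals. -/
theorem det_apply_monic_eq_det_apply_X_pow {A : Type*} [CommRing A] {m : ℕ}
    (F : Fin m → (A[X] →ₗ[A] A)) (Q : Fin m → A[X]) (hmonic : ∀ k, (Q k).Monic)
    (hdeg : ∀ k, (Q k).natDegree = (k : ℕ)) :
    Matrix.det (Matrix.of fun j k => F j (Q k)) =
      Matrix.det (Matrix.of fun j k : Fin m => F j (X ^ (k : ℕ))) := by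
  have hmul : (Matrix.of fun j k => F j (Q k)) =
      (Matrix.of fun j k : Fin m => F j (X ^ (k : ℕ))) *
        Matrix.of fun i k : Fin m => (Q k).coeff i := by
    ext j k
    have hlt : (Q k).natDegree < m := by rw [hdeg]; exact k.isLt
    rw [Matrix.mul_apply, Matrix.of_apply]
    conv_lhs => rw [(Q k).as_sum_range' m hlt]
    rw [map_sum, Finset.sum_range]
    refine Finset.sum_congr rfl fun i _ => ?_
    rw [← C_mul_X_pow_eq_monomial, ← smul_eq_C_mul, map_smul, smul_eq_mul, mul_comm]
    rfl
  have htri : Matrix.det (Matrix.of fun i k : Fin m => (Q k).coeff i) = 1 := by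
    rw [Matrix.det_of_isUpperTriangular]
    · refine Finset.prod_eq_one fun k _ => ?_
      rw [Matrix.of_apply, ← hdeg k]
      exact hmonic k
    · intro i k hik
      refine coeff_eq_zero_of_natDegree_lt ?_
      rw [hdeg]
      exact hik
  rw [hmul, Matrix.det_mul, htri, mul_one]

/-- If the first `n` functionals vanish on the last `s` monic polynomials, the determinant of
the values of `n + s` functionals on monomials splits into a product. -/
theorem det_apply_X_pow_of_apply_monic_eq_zero {A : Type*} [CommRing A] {n s : ℕ}
    (F : Fin n → (A[X] →ₗ[A] A)) (L : Fin s → (A[X] →ₗ[A] A))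
    (P : Fin s → A[X]) (hmonic : ∀ k, (P k).Monic)
    (hdeg : ∀ k, (P k).natDegree = n + (k : ℕ)) (hzero : ∀ j k, F j (P k) = 0) :
    Matrix.det (Matrix.of fun j k : Fin (n + s) => Fin.append F L j (X ^ (k : ℕ))) =
      Matrix.det (Matrix.of fun j k : Fin n => F j (X ^ (k : ℕ))) *
        Matrix.det (Matrix.of fun t k : Fin s => L t (P k)) := by
  nontriviality A
  rw [← det_apply_monic_eq_det_apply_X_pow (Fin.append F L)
      (Fin.append (fun k : Fin n => X ^ (k : ℕ)) P)
      (Fin.addCases (by simp [monic_X_pow]) (by simpa using hmonic))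
      (Fin.addCases (by simp) (by simpa using hdeg)),
    ← Matrix.det_submatrix_equiv_self finSumFinEquiv,
    ← Matrix.det_fromBlocks_zero₁₂ _
      (Matrix.of fun (t : Fin s) (k : Fin n) => L t (X ^ (k : ℕ)))]
  congr 1
  ext (i | i) (k | k) <;> simp [hzero]

/-- The linear functional `p ↦ ∫ p(x) x ^ j w(x) dx` on polynomials. -/
noncomputable def momentFunctional {a b : ℝ} {w : ℝ → ℝ}
    (hw : IntervalIntegrable w volume a b) (j : ℕ) : ℝ[X] →ₗ[ℝ] ℝ where
  toFun p := ∫ x in a..b, p.eval x * x ^ j * w x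
  map_add' p q := by
    rw [← intervalIntegral.integral_add
      (hw.continuousOn_mul (Continuous.continuousOn (by fun_prop)))
      (hw.continuousOn_mul (Continuous.continuousOn (by fun_prop)))]
    simp only [eval_add, add_mul]
  map_smul' c p := by
    simp only [eval_smul, smul_eq_mul, RingHom.id_apply, mul_assoc,
      intervalIntegral.integral_const_mul]

theorem momentFunctional_X_pow {a b : ℝ} {w : ℝ → ℝ}
    (hw : IntervalIntegrable w volume a b) (j k : ℕ) :
    momentFunctional hw j (X ^ k) = ∫ x in a..b, x ^ (j + k) * w x := by
  simp only [momentFunctional, LinearMap.coe_mk, AddHom.coe_mk, eval_pow, eval_X, ← pow_add,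
    add_comm k j]

/-- Separation of the "pole part" from the pure Hankel part: let `w` be integrable with
support in `[−1,1]`, let `Π_0, …, Π_{m−1}` be the monic orthogonal polynomials for `w`,
and let `L_1, …, L_s` be linear functionals on `ℝ[X]`. If the `m×m` matrix `R̃` has
moment rows `R̃_{jk} = ∫_{−1}^1 x^{j+k−2} w(x) dx` for `1 ≤ j ≤ m−s` and functional rows
`R̃_{m−s+t,k} = L_t(X^{k−1})` for `1 ≤ t ≤ s`, then
`det R̃ = det H · det_s [L_t(Π_{m−s+k−1})]`, where `H` is the `(m−s)×(m−s)` Hankel matrix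
of moments of `w`. -/
theorem det_modified_hankel_factorization (m s : ℕ) (hm : 1 ≤ m) (hs : s ≤ m)
    (w : ℝ → ℝ) (hw : Integrable w)
    (hsupp : Function.support w ⊆ Set.Icc (-1 : ℝ) 1)
    (P : Fin m → Polynomial ℝ)
    (hmonic : ∀ k : Fin m, (P k).Monic)
    (hdeg : ∀ k : Fin m, (P k).natDegree = (k : ℕ))
    (horth : ∀ k : Fin m, ∀ j : ℕ, j < (k : ℕ) →
      (∫ x in (-1 : ℝ)..1, (P k).eval x * x ^ j * w x) = 0)
    (L : Fin s → (Polynomial ℝ →ₗ[ℝ] ℝ))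
    (R : Matrix (Fin m) (Fin m) ℝ)
    (hRmoment : ∀ j k : Fin m, (j : ℕ) < m - s →
      R j k = ∫ x in (-1 : ℝ)..1, x ^ ((j : ℕ) + (k : ℕ)) * w x)
    (hRfunc : ∀ (t : Fin s) (k : Fin m),
      R ⟨m - s + (t : ℕ), by omega⟩ k = L t (Polynomial.X ^ (k : ℕ))) :
    Matrix.det R =
      Matrix.det (Matrix.of fun j k : Fin (m - s) =>
          ∫ x in (-1 : ℝ)..1, x ^ ((j : ℕ) + (k : ℕ)) * w x) *
        Matrix.det (Matrix.of fun t k : Fin s =>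
          L t (P ⟨m - s + (k : ℕ), by omega⟩)) := by
  have hwi : IntervalIntegrable w volume (-1) 1 := hw.intervalIntegrable
  have hsplit : m - s + s = m := Nat.sub_add_cancel hs
  have hdet := det_apply_X_pow_of_apply_monic_eq_zero
    (fun j : Fin (m - s) => momentFunctional hwi j) L
    (fun k : Fin s => P ⟨m - s + (k : ℕ), by omega⟩) (fun k => hmonic _) (fun k => hdeg _)
    (fun j k => horth _ _ (by simp only; omega))
  simp only [momentFunctional_X_pow] at hdet
  rw [← hdet, ← Matrix.det_submatrix_equiv_self (finCongr hsplit) R]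
  congr 1
  ext i k
  induction i using Fin.addCases with
  | left j =>
    simpa [momentFunctional_X_pow] using
      hRmoment (finCongr hsplit (Fin.castAdd s j)) (finCongr hsplit k) j.isLt
  | right t =>
    rw [Matrix.of_apply, Fin.append_right]
    exact hRfunc t (finCongr hsplit k)
end
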